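/- arXiv:math/0611576 — 3 statements merged into one kernel-verified Lean document; each statement's English description precedes it below -/
import Mathlib

section
/- Let s be a balanced standard episturmian sequence over an alphabet A such that at least 3 distinct letters occur in s, with directive sequence Δ = a·y·a·z, where a is a letter, y is a nonempty finite word whose letters are pairwise distinct and all different from a (so that a is the first repeated letter of Δ), and z is an infinite word whose first letter differs from a. Then a does not occur in z. -/
/-- The palindromic right closure `w⁽⁺⁾`: the shortest palindrome having `w` as a prefix. -/
def palClosure {A : Type*} [DecidableEq A] (w : List A) : List A :=
  w ++ (w.take (Nat.find (⟨w.length, by simp⟩ :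
    ∃ i, (w.drop i).reverse = w.drop i))).reverse

/-- Iterated palindromic closure: `Pal ε = ε`, `Pal (w·x) = (Pal w · x)⁽⁺⁾`. -/
def Pal {A : Type*} [DecidableEq A] (w : List A) : List A :=
  w.foldl (fun p x => palClosure (p ++ [x])) []

/-- `u` is a factor of the infinite word `s`. -/
def IsFactorOf {A : Type*} (u : List A) (s : ℕ → A) : Prop :=
  ∃ i : ℕ, u = (List.range u.length).map (fun j => s (i + j))

/-- `s` is balanced. -/
def IsBalanced {A : Type*} [DecidableEq A] (s : ℕ → A) : Prop :=
  ∀ u v : List A, IsFactorOf u s → IsFactorOf v s → u.length = v.length →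
    ∀ a : A, u.count a ≤ v.count a + 1

/-- `u` is a prefix of the infinite word `s`. -/
def IsPrefixOf {A : Type*} (u : List A) (s : ℕ → A) : Prop :=
  u = (List.range u.length).map s

/-- `s` is a standard episturmian sequence with directive sequence `Δ`. -/
def IsStdEpisturmian {A : Type*} [DecidableEq A] (s Δ : ℕ → A) : Prop :=
  ∀ n : ℕ, IsPrefixOf (Pal ((List.range n).map Δ)) s

/-- Concatenation of a finite word and an infinite word. -/
def wcat {A : Type*} (u : List A) (s : ℕ → A) : ℕ → A :=
  fun n => if h : n < u.length then u.get ⟨n, h⟩ else s (n - u.length)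

/-- The constant infinite word `c^ω`. -/
def constW {A : Type*} (c : A) : ℕ → A := fun _ => c

/-- The purely periodic infinite word `w^ω` (`d` is a default letter, irrelevant
when `w` is nonempty). -/
def perW {A : Type*} (w : List A) (d : A) : ℕ → A :=
  fun n => w.getD (n % w.length) d

/-- At least three distinct letters occur in `s`. -/
def ThreeLetters {A : Type*} (s : ℕ → A) : Prop :=
  ∃ a b c : A, a ≠ b ∧ a ≠ c ∧ b ≠ c ∧
    a ∈ Set.range s ∧ b ∈ Set.range s ∧ c ∈ Set.range s

lemma palClosure_spec {A : Type*} [DecidableEq A] (w : List A) :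
    (palClosure w).reverse = palClosure w ∧ ∃ t, (palClosure w).length = w.length + t ∧
      t ≤ w.length ∧ (w.drop t).reverse = w.drop t ∧
      (∀ t' < t, (w.drop t').reverse ≠ w.drop t') ∧ w <+: palClosure w := by
  have hex : ∃ i, (w.drop i).reverse = w.drop i := ⟨w.length, by simp⟩
  have h1 := Nat.find_spec hex
  have h2 : Nat.find hex ≤ w.length := Nat.find_min' hex (by simp)
  have hdef : palClosure w = w ++ (w.take (Nat.find hex)).reverse := rfl
  have h3 : ∀ t' < Nat.find hex, (w.drop t').reverse ≠ w.drop t' :=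
    fun t' ht' => Nat.find_min hex ht'
  generalize Nat.find hex = t at *
  rw [hdef]
  refine ⟨?_, t, ?_, h2, h1, h3, List.prefix_append _ _⟩
  · have hw : w.reverse = w.drop t ++ (w.take t).reverse := by
      conv_lhs => rw [← List.take_append_drop t w]
      rw [List.reverse_append, h1]
    rw [List.reverse_append, List.reverse_reverse, hw, ← List.append_assoc,
      List.take_append_drop]
  · simp [h2]

lemma prefix_get {A : Type*} {u : List A} {s : ℕ → A} (h : IsPrefixOf u s) (i : ℕ)
    (hi : i < u.length) : u[i] = s i := by
  have h' : u = (List.range u.length).map s := h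
  have : u[i]? = ((List.range u.length).map s)[i]? := by rw [← h']
  rw [List.getElem?_eq_getElem hi] at this
  simp [hi] at this
  exact this

/-- The list `[s t, …, s (n-1)]` is a palindrome iff symmetric pointwise. -/
lemma drop_pal_iff {A : Type*} (w : List A) (s : ℕ → A)
    (hs : ∀ i (hi : i < w.length), w[i] = s i) (t : ℕ) :
    (w.drop t).reverse = w.drop t ↔
      ∀ i, t ≤ i → i < w.length → s i = s (t + w.length - 1 - i) := by
  constructor
  · intro h i hi hil
    have h2 : (w.drop t).reverse[i - t]? = (w.drop t)[i - t]? := by rw [h]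
    rw [List.getElem?_reverse (by simp; omega)] at h2
    simp only [List.getElem?_drop, List.length_drop] at h2
    rw [List.getElem?_eq_getElem (by omega), List.getElem?_eq_getElem (by omega)] at h2
    simp only [Option.some.injEq, hs] at h2
    rw [show t + (i - t) = i by omega,
      show t + (w.length - t - 1 - (i - t)) = t + w.length - 1 - i by omega] at h2
    exact h2.symm
  · intro h
    apply List.ext_getElem
    · simp
    · intro j h1 h2
      simp only [List.length_drop, List.length_reverse] at h1 h2
      simp only [List.getElem_reverse, List.getElem_drop, hs, List.length_drop]
      rw [h (t + j) (by omega) (by omega)]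
      congr 1
      omega

/-- Numerical description of the palindromic prefixes. -/
lemma exists_lengths {A : Type*} [DecidableEq A] (s Δ : ℕ → A) (h : IsStdEpisturmian s Δ) :
    ∃ L : ℕ → ℕ, L 0 = 0 ∧ (∀ n, ∀ i < L n, s i = s (L n - 1 - i)) ∧ (∀ n, s (L n) = Δ n) ∧
      ∀ n, ∃ t, L (n + 1) = L n + 1 + t ∧ t ≤ L n ∧
        (∀ i, t ≤ i → i ≤ L n → s i = s (t + L n - i)) ∧
        (∀ t' < t, ¬ ∀ i, t' ≤ i → i ≤ L n → s i = s (t' + L n - i)) := by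
  set U : ℕ → List A := fun n => Pal ((List.range n).map Δ) with hU
  have hsucc : ∀ n, U (n + 1) = palClosure (U n ++ [Δ n]) := by
    intro n
    simp [hU, Pal, List.range_succ]
  have hpre : ∀ n i (hi : i < (U n).length), (U n)[i] = s i := fun n i hi => prefix_get (h n) i hi
  have hpal : ∀ n, (U n).reverse = U n := by
    intro n
    cases n with
    | zero => simp [hU, Pal]
    | succ n => rw [hsucc]; exact (palClosure_spec _).1
  have hpre1 : ∀ n i (hi : i < (U n ++ [Δ n]).length), (U n ++ [Δ n])[i] = s i := by
    intro n i hi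
    obtain ⟨-, t, -, -, -, -, hp⟩ := palClosure_spec (U n ++ [Δ n])
    rw [← hsucc] at hp
    have := hp.getElem hi
    rw [this, hpre]
  refine ⟨fun n => (U n).length, by simp [hU, Pal], ?_, ?_, ?_⟩
  · intro n i hi
    have := (drop_pal_iff (U n) s (hpre n) 0).1 (by simpa using hpal n) i (by omega) hi
    simpa using this
  · intro n
    have := hpre1 n (U n).length (by simp)
    simpa using this.symm
  · intro n
    obtain ⟨-, t, h1, h2, h3, h4, -⟩ := palClosure_spec (U n ++ [Δ n])
    rw [← hsucc] at h1
    have key := drop_pal_iff _ s (hpre1 n)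
    have key' : ∀ t, ((U n ++ [Δ n]).drop t).reverse = (U n ++ [Δ n]).drop t ↔
        ∀ i, t ≤ i → i ≤ (U n).length → s i = s (t + (U n).length - i) := by
      intro t
      rw [key t]
      simp only [List.length_append, List.length_singleton, Nat.lt_succ_iff]
      rfl
    refine ⟨t, by simpa using h1, ?_, (key' t).1 h3, fun t' ht' hc => h4 t' ht' ((key' t').2 hc)⟩
    by_contra hlt
    apply h4 (U n).length (by simpa using hlt)
    simp

lemma length_rec {A : Type*} (s Δ : ℕ → A) (L : ℕ → ℕ) (h0 : L 0 = 0)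
    (hp : ∀ n, ∀ i < L n, s i = s (L n - 1 - i)) (hl : ∀ n, s (L n) = Δ n)
    (hs : ∀ n, ∃ t, L (n + 1) = L n + 1 + t ∧ t ≤ L n ∧
        (∀ i, t ≤ i → i ≤ L n → s i = s (t + L n - i)) ∧
        (∀ t' < t, ¬ ∀ i, t' ≤ i → i ≤ L n → s i = s (t' + L n - i))) (n : ℕ) :
    (L (n + 1) = 2 * L n + 1 ∧ ∀ m < n, Δ m ≠ Δ n) ∨ ∃ m < n, Δ m = Δ n ∧ L (n + 1) + L m = 2 * L n := by
  have hmono : StrictMono L := strictMono_nat_of_lt_succ fun n => by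
    obtain ⟨t, h, -⟩ := hs n; omega
  have F2 : ∀ q, (∀ i < q, s i = s (q - 1 - i)) → ∀ n, L n < q → L (n + 1) ≤ q := by
    intro q hq n hn
    obtain ⟨t, h1, h2, -, h4⟩ := hs n
    by_contra hlt
    apply h4 (q - L n - 1) (by omega)
    intro i hi hi2
    rw [hq i (by omega)]
    congr 1; omega
  have F2' : ∀ q, (∀ i < q, s i = s (q - 1 - i)) → ∃ m, q = L m := by
    intro q hq
    by_contra hne
    push Not at hne
    have : ∀ n, L n < q := by
      intro n
      induction n with
      | zero => have := hne 0; omega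
      | succ n ih => have := F2 q hq n ih; have := hne (n + 1); omega
    have := this q
    have := hmono.id_le q
    simp at this
    omega
  obtain ⟨t, h1, h2, h3, h4⟩ := hs n
  by_cases ht : t = L n
  · left
    refine ⟨by omega, fun m hm he => ?_⟩
    have hLm : L m < L n := hmono hm
    apply h4 (L n - L m - 1) (by omega)
    intro i hi1 hi2
    have hend : s (L n - L m - 1) = s (L n) := by
      rw [hl n, ← he, ← hl m, hp n _ (by omega)]; congr 1; omega
    rcases eq_or_lt_of_le hi2 with rfl | hi3
    · rw [← hend]; congr 1; omega
    · rcases eq_or_lt_of_le hi1 with rfl | hi4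
      · rw [hend]; congr 1; omega
      · rw [hp n i hi3, hp m _ (by omega), hp n _ (by omega)]; congr 1; omega
  · right
    obtain ⟨m, hm⟩ := F2' (L n - t - 1) (by
      intro i hi
      rw [hp n i (by omega), h3 _ (by omega) (by omega), hp n _ (by omega)]
      congr 1; omega)
    have hmn : m < n := hmono.lt_iff_lt.1 (by omega)
    refine ⟨m, hmn, ?_, by omega⟩
    rw [← hl m, ← hm, ← hl n, hp n _ (by omega), ← (by rw [h3 t le_rfl (by omega)]; congr 1; omega :
      s t = s (L n))]
    congr 1; omega

lemma count_alt {A : Type*} [DecidableEq A] (a : A) (f : ℕ → A) (r : ℕ)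
    (hf : ∀ j < 2 * r + 1, f j = a ↔ j % 2 = 1) :
    ((List.range (2 * r + 1)).map f).count a = r := by
  induction r with
  | zero =>
    have := hf 0 (by omega)
    simp at this
    simp [List.range_succ, this]
  | succ r ih =>
    have h1 := (hf (2 * r + 1) (by omega)).2 (by omega)
    have h2 : f (2 * r + 2) ≠ a := fun h => by
      have := (hf (2 * r + 2) (by omega)).1 h
      omega
    rw [show 2 * (r + 1) + 1 = (2 * r + 1) + 1 + 1 by ring, List.range_succ, List.range_succ]
    simp only [List.map_append, List.count_append, ih (fun j hj => hf j (by omega))]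
    simp [h1, h2]

/-- Imbalance from the two windows. -/
lemma imbalance {A : Type*} [DecidableEq A] (s : ℕ → A) (a : A) (r q B : ℕ)
    (hbal : IsBalanced s)
    (h1 : ∀ j < 2 * r + 2, s (q + j) = a ↔ j % 2 = 0)
    (hB : s B = a) (h2 : ∀ j < 2 * r - 1, s (B + 1 + j) = a ↔ j % 2 = 0) (hr : 1 ≤ r)
    (hE : s (B + 2 * r) = a) : False := by
  have c1 := count_alt a (fun j => s (q + 1 + j)) r (by
    intro j hj
    have := h1 (1 + j) (by omega)
    rw [← add_assoc] at this
    rw [this]; omega)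
  have c2 : ((List.range (2 * r + 1)).map (fun j => s (B + j))).count a = r + 2 := by
    obtain ⟨r, rfl⟩ : ∃ k, r = k + 1 := ⟨r - 1, by omega⟩
    rcases Nat.eq_zero_or_pos r with rfl | hr0
    · have h20 := (h2 0 (by omega)).2 rfl
      simp [List.range_succ] at *
      simp [hB, h20, hE]
    · have c3 := count_alt a (fun j => s (B + 1 + (j + 1))) (r - 1) (by
        intro j hj
        rw [h2 (j + 1) (by omega)]; omega)
      have hx := (h2 0 (by omega)).2 rfl
      have hy := (h2 (2 * r) (by omega)).2 (by omega)
      rw [show 2 * (r + 1) + 1 = (2 * (r - 1) + 1 + 1 + 1) + 1 + 1 - 0 by omega, Nat.sub_zero]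
      rw [List.range_succ, List.range_succ, List.range_succ_eq_map, List.range_succ_eq_map]
      simp only [List.map_cons, List.map_append, List.map_map, List.count_append, List.count_cons,
        List.map_nil, List.count_nil]
      have e : (fun j => s (B + j)) ∘ Nat.succ ∘ Nat.succ = fun j => s (B + 1 + (j + 1)) := by
        funext j
        simp only [Function.comp]
        congr 1; omega
      rw [e, c3, show B + (2 * (r - 1) + 1 + 1 + 1) = B + 1 + 2 * r by omega, hy,
        show B + (2 * (r - 1) + 1 + 1 + 1 + 1) = B + 2 * (r + 1) by omega, hE]
      simp only [add_zero, Nat.succ_eq_add_one, zero_add] at *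
      simp [hB, hx]
      omega
  have := hbal ((List.range (2 * r + 1)).map (fun j => s (B + j)))
    ((List.range (2 * r + 1)).map (fun j => s (q + 1 + j))) ⟨B, by simp⟩ ⟨q + 1, by simp⟩
    (by simp) a
  omega

/-- If `s` is a balanced standard episturmian sequence over at least 3 letters whose
directive sequence is `Δ = a·y·a·z` with `a` the first repeated letter and `z` not
starting with `a`, then `a` does not occur in `z`. -/
theorem no_third_occurrence {A : Type*} [DecidableEq A] (s Δ : ℕ → A)
    (a : A) (y : List A) (z : ℕ → A)
    (hbal : IsBalanced s) (hepi : IsStdEpisturmian s Δ) (h3 : ThreeLetters s)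
    (hy : y ≠ []) (hnd : y.Nodup) (hay : a ∉ y) (hz : z 0 ≠ a)
    (hΔ : Δ = wcat (a :: y ++ [a]) z) :
    a ∉ Set.range z := by
  rintro ⟨j0, hj0⟩
  obtain ⟨L, h0, hp, hl, hs⟩ := exists_lengths s Δ hepi
  have hrec := length_rec s Δ L h0 hp hl hs
  have hmono : StrictMono L := strictMono_nat_of_lt_succ fun n => by
    obtain ⟨t, h, -⟩ := hs n; omega
  have hup : ∀ n, L (n + 1) ≤ 2 * L n + 1 := fun n => by
    obtain ⟨t, h, h', -⟩ := hs n; omega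
  clear hs
  set k := y.length with hk
  have hk1 : 1 ≤ k := List.length_pos_iff.2 hy
  -- values of Δ
  have hD0 : Δ 0 = a := by simp [hΔ, wcat]
  have hDy : ∀ i (hi : i < y.length), Δ (i + 1) = y[i] := by
    intro i hi
    have : i + 1 < (a :: y ++ [a]).length := by simp; omega
    rw [hΔ, wcat, dif_pos this]
    simp [hi]
  have hDk : Δ (k + 1) = a := by
    have : k + 1 < (a :: y ++ [a]).length := by simp [hk]
    rw [hΔ, wcat, dif_pos this]
    simp [hk]
  have hDz : ∀ i, Δ (k + 2 + i) = z i := by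
    intro i
    have : ¬ k + 2 + i < (a :: y ++ [a]).length := by simp [hk]; omega
    rw [hΔ, wcat, dif_neg this]
    congr 1; simp [hk]
  clear hΔ
  have hinj : ∀ m n, m < n → n ≤ k → Δ m ≠ Δ n := by
    intro m n hmn hn
    obtain ⟨n, rfl⟩ : ∃ n', n = n' + 1 := ⟨n - 1, by omega⟩
    rw [hDy n (by omega)]
    cases m with
    | zero => rw [hD0]; exact fun h => hay (h ▸ List.getElem_mem _)
    | succ m =>
      rw [hDy m (by omega)]
      intro h
      have := (hnd.getElem_inj_iff).1 h
      omega
  have hLk : ∀ n ≤ k, L (n + 1) = 2 * L n + 1 := by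
    intro n hn
    rcases hrec n with ⟨h, -⟩ | ⟨m, hm, he, -⟩
    · exact h
    · exact absurd he (hinj m n hm hn)
  have hL1 : L 1 = 1 := by have := hLk 0 (by omega); rw [h0] at this; exact this
  -- alternation of P
  have halt : ∀ n, n ≤ k → L (n + 1) % 2 = 1 ∧ ∀ i < L (n + 1), (s i = a ↔ i % 2 = 0) := by
    intro n
    induction n with
    | zero =>
      intro _
      refine ⟨by simp [hL1], fun i hi => ?_⟩
      have : i = 0 := by simp [hL1] at hi; exact hi
      subst this
      have := hl 0
      rw [h0, hD0] at this
      simp [this]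
    | succ n ih =>
      intro hn
      obtain ⟨ho, ha⟩ := ih (by omega)
      have hLn := hLk (n + 1) hn
      refine ⟨by omega, fun i hi => ?_⟩
      rcases lt_trichotomy i (L (n + 1)) with hlt | rfl | hgt
      · exact ha i hlt
      · rw [hl]
        have : a ≠ Δ (n + 1) := hD0 ▸ hinj 0 (n + 1) (by omega) hn
        constructor
        · intro h; exact absurd h.symm this
        · intro h; omega
      · rw [hp _ i hi, ha _ (by omega)]; omega
  obtain ⟨hpo, hP⟩ := halt k le_rfl
  have hp3 : 3 ≤ L (k + 1) := by
    have := hLk k le_rfl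
    have : L 1 ≤ L k := hmono.monotone hk1
    omega
  -- window a P a
  set N := k + 2 + j0 with hN
  have hDN : Δ N = a := by rw [hN, hDz, hj0]
  have hLN : L (k + 1) < L N := hmono (by omega)
  obtain ⟨r, hr⟩ : ∃ r, L (k + 1) + 1 = 2 * r := ⟨(L (k + 1) + 1) / 2, by omega⟩
  have hfinal : ∀ q, (∀ j < 2 * r + 2, s (q + j) = a ↔ j % 2 = 0) → False := by
    intro q hq
    refine imbalance s a r q (L N - 2 * r) hbal hq ?_ ?_ (by omega) ?_
    · rw [hp N _ (by omega), ← hDk, ← hl (k + 1)]; congr 1; omega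
    · intro j hj
      rw [hp N _ (by omega), hP _ (by omega)]; omega
    · rw [← hDN, ← hl N]; congr 1; omega
  by_cases hnew : ∃ M, ∀ m ≤ k, Δ m ≠ Δ M
  · -- a letter outside a, y
    classical
    have hM := Nat.find_spec hnew
    have hmin : ∀ m < Nat.find hnew, Δ m ≠ Δ (Nat.find hnew) := by
      intro m hm he
      apply Nat.find_min hnew hm
      rw [he]; exact hM
    generalize Nat.find hnew = M at hM hmin
    have hMk : k + 1 < M := by
      by_contra hc
      rcases Nat.lt_or_ge k M with h | h
      · have : M = k + 1 := by omega
        subst this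
        exact hM 0 (by omega) (by rw [hD0, hDk])
      · exact hM M h rfl
    have hLM : L (M + 1) = 2 * L M + 1 := by
      rcases hrec M with ⟨h, -⟩ | ⟨m, hm, he, -⟩
      · exact h
      · exact absurd he (hmin m hm)
    have hLkM : L (k + 1) < L M := hmono hMk
    have hleft : ∀ i, L M - L (k + 1) ≤ i → i < L M →
        (s i = a ↔ (i - (L M - L (k + 1))) % 2 = 0) := by
      intro i hi hi2
      rw [hp M _ hi2, hP _ (by omega)]; omega
    apply hfinal (L M - L (k + 1))
    intro j hj
    rcases lt_trichotomy (L M - L (k + 1) + j) (L M) with hlt | heq | hgt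
    · rw [hleft _ (by omega) hlt]; omega
    · rw [heq, hl, ← hD0]
      constructor
      · intro h; exact absurd h.symm (hM 0 (by omega))
      · intro h; omega
    · rw [hp (M + 1) _ (by omega), hleft _ (by omega) (by omega)]; omega
  · push Not at hnew
    have hlet : ∀ i, ∃ m ≤ k, Δ m = s i := by
      have : ∀ n, ∀ i < L n, ∃ m ≤ k, Δ m = s i := by
        intro n
        induction n with
        | zero => intro i hi; omega
        | succ n ih =>
          intro i hi
          rcases lt_trichotomy i (L n) with hlt | rfl | hgt
          · exact ih i hlt
          · rw [hl]; exact hnew n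
          · rw [hp _ i hi]; have := hup n; exact ih _ (by omega)
      intro i
      refine this (i + 1) i ?_
      have : i + 1 ≤ L (i + 1) := hmono.id_le (i + 1)
      omega
    have hk2 : 2 ≤ k := by
      by_contra hc
      obtain ⟨b, c, d, hbc, hbd, hcd, ⟨i1, rfl⟩, ⟨i2, rfl⟩, ⟨i3, rfl⟩⟩ := h3
      obtain ⟨m1, l1, e1⟩ := hlet i1
      obtain ⟨m2, l2, e2⟩ := hlet i2
      obtain ⟨m3, l3, e3⟩ := hlet i3
      rw [← e1, ← e2] at hbc
      rw [← e1, ← e3] at hbd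
      rw [← e2, ← e3] at hcd
      have : m1 ≠ m2 := fun h => hbc (by rw [h])
      have : m1 ≠ m3 := fun h => hbd (by rw [h])
      have : m2 ≠ m3 := fun h => hcd (by rw [h])
      omega
    have hDc : Δ (k + 2) ≠ a := by have := hDz 0; simp at this; rwa [this]
    have hL2 : L (k + 2) = 2 * L (k + 1) := by
      rcases hrec (k + 1) with ⟨-, h⟩ | ⟨m, hm, he, h⟩
      · exact absurd (by rw [hD0, hDk]) (h 0 (by omega))
      · have : m = 0 := by
          by_contra hm0
          exact hinj 0 m (by omega) (by omega) (by rw [hD0, he, hDk])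
        subst this
        simp only [h0] at h
        exact h
    rcases hrec (k + 2) with ⟨-, h⟩ | ⟨m, hm, he, h⟩
    · obtain ⟨m, hm, he⟩ := hnew (k + 2)
      exact h m (by omega) he
    · have hm0 : m ≠ 0 := by rintro rfl; exact hDc (by rw [← he, hD0])
      have hmk : m ≠ k + 1 := by rintro rfl; exact hDc (by rw [← he, hDk])
      obtain ⟨m, rfl⟩ : ∃ m', m = m' + 1 := ⟨m - 1, by omega⟩
      have hmo := (halt m (by omega)).1
      have hm3 : L (m + 1) + 3 ≤ L (k + 1) := by
        have e1 := hLk k le_rfl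
        have e2 := hLk 1 (by omega)
        have e3 : L (m + 1) ≤ L k := hmono.monotone (by omega)
        have e4 : L 2 ≤ L k := hmono.monotone hk2
        simp only [Nat.reduceAdd] at e2
        omega
      have hmid : ∀ i, L (k + 1) ≤ i → i < L (k + 2) →
          (s i = a ↔ (i - L (k + 1)) % 2 = 0) := by
        intro i hi hi2
        rw [hp (k + 2) _ hi2, hP _ (by omega)]; omega
      have h' : L (k + 2 + 1) + L (m + 1) = 4 * L (k + 1) := by omega
      apply hfinal (L (k + 1))
      intro j hj
      by_cases hj2 : L (k + 1) + j < L (k + 2)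
      · rw [hmid _ (by omega) hj2]; omega
      · rw [hp (k + 2 + 1) _ (by omega), hmid _ (by omega) (by omega)]; omega
end

section
/- Let s be a balanced episturmian sequence over an alphabet A such that exactly k ≥ 3 distinct letters occur in s, and suppose that for every letter a occurring in s the frequency f_a(s) (the limit as n → ∞ of the number of occurrences of a in the length-n prefix of s divided by n) exists, and that these frequencies are pairwise distinct (f_a(s) ≠ f_b(s) for all distinct letters a, b occurring in s). Then there exist pairwise distinct letters a₁,…,a_k such that s has the same set of factors as (Pal(a₁·a₂⋯a_k))^ω. -/
namespace Fraenkel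

set_option linter.unusedSectionVars false

variable {A : Type*} [DecidableEq A]

/-- The morphism `a ↦ a`, `b ↦ ab`. -/
def psi (a : A) (w : List A) : List A := w.flatMap (fun b => if b = a then [a] else [a, b])

/-- Composition of the morphisms along `u`. -/
def mu (u : List A) (w : List A) : List A := u.foldr psi w

@[simp] theorem psi_nil (a : A) : psi a [] = [] := rfl

theorem psi_cons (a b : A) (w : List A) :
    psi a (b :: w) = (if b = a then [a] else [a, b]) ++ psi a w := rfl

theorem psi_append (a : A) (v w : List A) : psi a (v ++ w) = psi a v ++ psi a w := by
  simp [psi]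

theorem psi_self (a : A) : psi a [a] = [a] := by simp [psi]

theorem psi_ne {a b : A} (h : b ≠ a) : psi a [b] = [a, b] := by simp [psi, h]

/-- `psi a w ++ [a]` starts with `a`. -/
theorem psi_start (a : A) (w : List A) : ∃ r, psi a w ++ [a] = a :: r := by
  cases w with
  | nil => exact ⟨[], rfl⟩
  | cons b w =>
    rw [psi_cons]
    split_ifs <;> simp

theorem psi_reverse (a : A) (w : List A) :
    psi a w.reverse ++ [a] = (psi a w ++ [a]).reverse := by
  induction w with
  | nil => rfl
  | cons b w ih =>
    rw [List.reverse_cons, psi_append, List.append_assoc]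
    by_cases h : b = a
    · subst h
      rw [psi_self, psi_cons]
      simp only [List.reverse_append, List.reverse_cons] at ih ⊢
      simp at ih ⊢
      have : psi b w.reverse ++ [b, b] = (psi b w.reverse ++ [b]) ++ [b] := by simp
      rw [this, ih]
      simp
    · rw [psi_ne h, psi_cons]
      simp only [List.reverse_append, List.reverse_cons] at ih ⊢
      simp [h] at ih ⊢
      have : psi a w.reverse ++ [a, b, a] = (psi a w.reverse ++ [a]) ++ [b, a] := by simp
      rw [this, ih]
      simp

theorem psi_inj (a : A) : ∀ v w : List A, psi a v = psi a w → v = w := by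
  intro v
  induction v with
  | nil =>
    intro w h
    cases w with
    | nil => rfl
    | cons b w =>
      rw [psi_cons] at h
      split_ifs at h <;> simp at h
  | cons c v ih =>
    intro w h
    cases w with
    | nil =>
      rw [psi_cons] at h
      split_ifs at h <;> simp at h
    | cons b w =>
      rw [psi_cons, psi_cons] at h
      by_cases hc : c = a <;> by_cases hb : b = a
      · simp [hc, hb] at h
        rw [hc, hb, ih w h]
      · simp [hc, hb] at h
        exfalso
        obtain ⟨r, hr⟩ := psi_start a v
        rw [h] at hr
        simp at hr
        exact hb hr.1
      · simp [hc, hb] at h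
        exfalso
        obtain ⟨r, hr⟩ := psi_start a w
        rw [← h] at hr
        simp at hr
        exact hc hr.1
      · simp [hc, hb] at h
        rw [h.1, ih w h.2]

/-- Desubstitution at an occurrence of `a`. -/
theorem psi_split (a : A) : ∀ (w G R : List A), psi a w ++ [a] = G ++ a :: R →
    ∃ g r, w = g ++ r ∧ G = psi a g ∧ a :: R = psi a r ++ [a] := by
  intro w
  induction w with
  | nil =>
    intro G R h
    cases G with
    | nil => exact ⟨[], [], rfl, rfl, h.symm⟩
    | cons x G => simp at h
  | cons b w ih =>
    intro G R h
    cases G with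
    | nil => exact ⟨[], b :: w, rfl, rfl, h.symm⟩
    | cons x G =>
      rw [psi_cons] at h
      by_cases hb : b = a
      · simp [hb] at h
        obtain ⟨g, r, h1, h2, h3⟩ := ih G R h.2
        refine ⟨b :: g, r, by simp [h1], ?_, h3⟩
        rw [psi_cons, h2, ← h.1]; simp [hb]
      · simp [hb] at h
        cases G with
        | nil => simp at h; exact absurd h.2.1 hb
        | cons y G =>
          simp at h
          obtain ⟨g, r, h1, h2, h3⟩ := ih G R h.2.2
          refine ⟨b :: g, r, by simp [h1], ?_, h3⟩
          rw [psi_cons, h2, ← h.1, ← h.2.1]; simp [hb]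

/-- A letter other than `a` is preceded by `a`. -/
theorem psi_pred (a x : A) (hx : x ≠ a) : ∀ (w G R : List A), psi a w = G ++ x :: R →
    ∃ G', G = G' ++ [a] := by
  intro w
  induction w with
  | nil => intro G R h; simp at h
  | cons b w ih =>
    intro G R h
    rw [psi_cons] at h
    by_cases hb : b = a
    · simp [hb] at h
      cases G with
      | nil => simp at h; exact absurd h.1.symm hx
      | cons y G =>
        simp at h
        obtain ⟨G', hG⟩ := ih G R h.2
        exact ⟨y :: G', by simp [hG]⟩
    · simp [hb] at h
      cases G with
      | nil => simp at h; exact absurd h.1.symm hx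
      | cons y G =>
        cases G with
        | nil => simp at h; exact ⟨[], by simp [h.1]⟩
        | cons z G =>
          simp at h
          obtain ⟨G', hG⟩ := ih G R h.2.2
          exact ⟨y :: z :: G', by simp [hG]⟩

/-! Palindromic closure -/

theorem palClosure_eq (g r : List A) (hr : r.reverse = r)
    (hmin : ∀ g' r', g ++ r = g' ++ r' → r'.reverse = r' → g.length ≤ g'.length) :
    palClosure (g ++ r) = g ++ r ++ g.reverse := by
  unfold palClosure
  have : Nat.find (⟨(g ++ r).length, by simp⟩ :
      ∃ i, ((g ++ r).drop i).reverse = (g ++ r).drop i) = g.length := by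
    rw [Nat.find_eq_iff]
    refine ⟨by simp [hr], ?_⟩
    intro n hn h
    have := hmin ((g ++ r).take n) ((g ++ r).drop n) (by rw [List.take_append_drop]) h
    rw [List.length_take] at this
    omega
  rw [this]
  simp

theorem palClosure_exists (w : List A) : ∃ g r, w = g ++ r ∧ r.reverse = r ∧
    ∀ g' r', g ++ r = g' ++ r' → r'.reverse = r' → g.length ≤ g'.length := by
  classical
  have hex : ∃ i, (w.drop i).reverse = w.drop i := ⟨w.length, by simp⟩
  refine ⟨w.take (Nat.find hex), w.drop (Nat.find hex), by simp, Nat.find_spec hex, ?_⟩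
  intro g' r' h hr
  rw [List.take_append_drop] at h
  have : Nat.find hex ≤ g'.length := Nat.find_min' hex (by subst h; simp [hr])
  rw [List.length_take]
  omega

theorem psi_pal_iff (a : A) (w : List A) :
    (psi a w ++ [a]).reverse = psi a w ++ [a] ↔ w.reverse = w := by
  rw [← psi_reverse]
  constructor
  · intro h
    exact psi_inj a _ _ (List.append_cancel_right h)
  · intro h; rw [h]

theorem psi_length_mono (a : A) (g r g' r' : List A) (h : g ++ r = g' ++ r')
    (hl : g.length ≤ g'.length) : (psi a g).length ≤ (psi a g').length := by
  obtain ⟨m, hm⟩ : g <+: g' :=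
    List.prefix_of_prefix_length_le ⟨r, rfl⟩ ⟨r', h.symm⟩ hl
  rw [← hm, psi_append]
  simp

theorem pal_last {x : A} {r s : List A} (h : r.reverse = r) (hr : r = s ++ [x]) :
    ∃ s', r = x :: s' := by
  rw [hr] at h
  simp at h
  exact ⟨_, hr.trans h.symm⟩

theorem suffix_last {x : A} {w g r : List A} (h : w ++ [x] = g ++ r) (hr : r ≠ []) :
    ∃ s, r = s ++ [x] := by
  obtain ⟨s, y, rfl⟩ := List.eq_nil_or_concat r |>.resolve_left hr
  rw [List.concat_eq_append, ← List.append_assoc] at h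
  have := List.append_inj' h rfl
  simp at this
  exact ⟨s, by simp [this.2]⟩

theorem palClosure_psi (a x : A) (p : List A) :
    palClosure (psi a p ++ [a] ++ [x]) = psi a (palClosure (p ++ [x])) ++ [a] := by
  obtain ⟨g, r, h, hr, hmin⟩ := palClosure_exists (p ++ [x])
  rw [h, palClosure_eq g r hr hmin]
  have key : psi a (g ++ r ++ g.reverse) ++ [a] = psi a (g ++ r) ++ a :: (psi a g).reverse := by
    rw [psi_append, List.append_assoc, psi_reverse]; simp
  rw [key]
  by_cases hx : x = a
  · subst hx
    have e : psi x p ++ [x] ++ [x] = psi x g ++ (psi x r ++ [x]) := by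
      rw [← List.append_assoc, ← psi_append, ← h, psi_append, psi_self]
    have e2 : psi x p ++ [x] ++ [x] = psi x (g ++ r) ++ [x] := by
      rw [e, psi_append]; simp
    rw [e, palClosure_eq _ _ ((psi_pal_iff x r).2 hr)]
    · rw [psi_append]; simp
    · intro G R hGR hR
      by_cases hR0 : R = []
      · have := congrArg List.length hGR
        simp [hR0] at this
        omega
      · rw [← e] at hGR
        obtain ⟨s, hs⟩ := suffix_last hGR hR0
        obtain ⟨s', hs'⟩ := pal_last hR hs
        rw [e2, hs'] at hGR
        obtain ⟨g', r', h1, h2, h3⟩ := psi_split x _ _ _ hGR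
        rw [hs', h3, psi_pal_iff] at hR
        rw [h2]
        exact psi_length_mono x g r g' r' h1 (hmin g' r' h1 hR)
  · have e2 : psi a p ++ [a] ++ [x] = psi a (g ++ r) := by
      rw [← h, psi_append, psi_ne hx]; simp
    have hr0 : r ≠ [] := by
      rintro rfl
      have := hmin p [x] (by rw [h]) rfl
      have := congrArg List.length h
      simp at this
      omega
    obtain ⟨s, hs⟩ := suffix_last h hr0
    obtain ⟨s', hs'⟩ := pal_last hr hs
    have e3 : psi a r = a :: (x :: psi a s') := by
      rw [hs', psi_cons]; simp [hx]
    have e : psi a p ++ [a] ++ [x] = (psi a g ++ [a]) ++ (x :: psi a s') := by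
      rw [e2, psi_append, e3]; simp
    have hpal : (x :: psi a s').reverse = x :: psi a s' := by
      have := (psi_pal_iff a r).2 hr
      rw [e3] at this
      simp only [List.reverse_append, List.cons_append, List.reverse_cons, List.nil_append,
        List.reverse_nil] at this
      have h5 := (List.cons.inj this).2
      have h6 : ((psi a s').reverse ++ [x]) ++ [a] = (x :: psi a s') ++ [a] := by
        simpa using h5
      simpa using List.append_cancel_right h6
    rw [e, palClosure_eq _ _ hpal]
    · rw [psi_append, e3]; simp
    · intro G R hGR hR
      by_cases hR0 : R = []
      · have := congrArg List.length hGR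
        simp [hR0] at this
        simp
        omega
      · rw [← e] at hGR
        obtain ⟨s1, hs1⟩ := suffix_last hGR hR0
        obtain ⟨s2, hs2⟩ := pal_last hR hs1
        rw [e2, hs2] at hGR
        obtain ⟨G', hG'⟩ := psi_pred a x hx _ _ _ hGR
        have : psi a (g ++ r) ++ [a] = G' ++ a :: (R ++ [a]) := by
          rw [hGR, hG', hs2]; simp
        obtain ⟨g', r', h1, h2, h3⟩ := psi_split a _ _ _ this
        have h4 : r'.reverse = r' := by
          rw [← psi_pal_iff a, ← h3]
          simp [hR]
        have := psi_length_mono a g r g' r' h1 (hmin g' r' h1 h4)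
        rw [hG', h2]
        simpa using this

theorem Pal_concat (w : List A) (x : A) : Pal (w ++ [x]) = palClosure (Pal w ++ [x]) := by
  simp [Pal]

theorem Pal_cons (a : A) (w : List A) : Pal (a :: w) = psi a (Pal w) ++ [a] := by
  induction w using List.reverseRecOn with
  | nil =>
    have := palClosure_eq ([] : List A) [a] rfl (by simp)
    simpa [Pal] using this
  | append_singleton w x ih =>
    rw [← List.cons_append, Pal_concat, ih, palClosure_psi, Pal_concat]

@[simp] theorem Pal_nil : Pal ([] : List A) = [] := rfl

theorem mu_cons (a : A) (u w : List A) : mu (a :: u) w = psi a (mu u w) := rfl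
@[simp] theorem mu_nil (w : List A) : mu [] w = w := rfl
theorem mu_append (u v w : List A) : mu u (v ++ w) = mu u v ++ mu u w := by
  induction u with
  | nil => rfl
  | cons a u ih => simp only [mu_cons, ih, psi_append]

theorem mu_comp (u v w : List A) : mu (u ++ v) w = mu u (mu v w) := by
  simp [mu]

theorem mu_empty (u : List A) : mu u [] = [] := by
  induction u with
  | nil => rfl
  | cons a u ih => simp [mu_cons, ih]

theorem Pal_append (u v : List A) : Pal (u ++ v) = mu u (Pal v) ++ Pal u := by
  induction u with
  | nil => simp
  | cons a u ih =>
    rw [List.cons_append, Pal_cons, ih, psi_append, mu_cons, Pal_cons]; simp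

theorem Pal_prefix_mu (u w : List A) : Pal u <+: mu u w ++ Pal u := by
  induction u with
  | nil => simp
  | cons a u ih =>
    obtain ⟨c, hc⟩ := ih
    rw [mu_cons, Pal_cons, ← List.append_assoc, ← psi_append, ← hc, psi_append, List.append_assoc]
    obtain ⟨r, hr⟩ := psi_start a c
    rw [hr]
    exact ⟨r, by simp⟩

theorem mu_new (u : List A) (y : A) (h : y ∉ u) : mu u [y] = Pal u ++ [y] := by
  induction u with
  | nil => rfl
  | cons a u ih =>
    simp at h
    rw [mu_cons, ih h.2, psi_append, psi_ne h.1, Pal_cons]; simp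

theorem infix_mu (u v X : List A) (h : X <:+: Pal v) :
    mu u X ++ Pal u <:+: Pal (u ++ v) := by
  obtain ⟨a, b, hab⟩ := h
  rw [Pal_append, ← hab, mu_append, mu_append]
  obtain ⟨c, hc⟩ := Pal_prefix_mu u b
  exact ⟨mu u a, c, by simp [← hc]⟩

theorem mem_psi (a b : A) (w : List A) (h : b ∈ psi a w) : b = a ∨ b ∈ w := by
  simp only [psi, List.mem_flatMap] at h
  obtain ⟨c, hc, h⟩ := h
  split_ifs at h with h1
  · simp at h; exact Or.inl h
  · simp at h; rcases h with h | h
    · exact Or.inl h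
    · exact Or.inr (h ▸ hc)

theorem mem_psi_of_mem (a b : A) (w : List A) (h : b ∈ w) : b ∈ psi a w := by
  simp only [psi, List.mem_flatMap]
  refine ⟨b, h, ?_⟩
  split_ifs with h1 <;> simp [h1]

theorem mem_mu (u w : List A) (b : A) (h : b ∈ mu u w) : b ∈ u ∨ b ∈ w := by
  induction u with
  | nil => exact Or.inr h
  | cons a u ih =>
    rcases mem_psi _ _ _ h with h | h
    · simp [h]
    · rcases ih h with h | h <;> simp [h]

theorem mem_Pal (w : List A) (b : A) : b ∈ Pal w ↔ b ∈ w := by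
  induction w with
  | nil => simp
  | cons a w ih =>
    rw [Pal_cons]
    simp only [List.mem_append, List.mem_cons, List.not_mem_nil, or_false]
    constructor
    · rintro (h | h)
      · rcases mem_psi _ _ _ h with h | h
        · exact Or.inl h
        · exact Or.inr (ih.1 h)
      · exact Or.inl h
    · rintro (h | h)
      · exact Or.inr h
      · exact Or.inl (mem_psi_of_mem _ _ _ (ih.2 h))

theorem psi_length_ge (a : A) (w : List A) : w.length ≤ (psi a w).length := by
  induction w with
  | nil => simp
  | cons b w ih =>
    rw [psi_cons]
    split_ifs <;> simp <;> omega

theorem Pal_length_ge (w : List A) : w.length ≤ (Pal w).length := by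
  induction w with
  | nil => simp
  | cons b w ih =>
    rw [Pal_cons]
    have := psi_length_ge b (Pal w)
    simp; omega

theorem mu_length_ge (u w : List A) : w.length ≤ (mu u w).length := by
  induction u with
  | nil => simp
  | cons b u ih => rw [mu_cons]; exact ih.trans (psi_length_ge _ _)

/-- `z` not in `u` and `o ≠ z` gives a length gap. -/
theorem mu_gap (u : List A) (o z : A) (hz : z ∉ u) :
    (mu u [o]).length + u.count o ≤ (mu u [z]).length := by
  induction u using List.reverseRecOn with
  | nil => simp
  | append_singleton u x ih =>
    simp at hz
    have := ih hz.1
    have hz' : z ≠ x := hz.2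
    rw [mu_comp, mu_comp]
    have e : mu [x] [z] = [x] ++ [z] := psi_ne hz'
    rw [e, mu_append]
    by_cases hx : o = x
    · subst hx
      have e : mu [o] [o] = [o] := psi_self o
      have := mu_length_ge u [o]
      rw [e]
      simp at this ⊢
      omega
    · have e : mu [x] [o] = [x] ++ [o] := psi_ne hx
      rw [e, mu_append]
      simp [List.count_append, Ne.symm hx]
      omega

theorem mu_length_two (u : List A) (z b : A) (hb : b ∈ u) (hbz : b ≠ z) :
    2 ≤ (mu u [z]).length := by
  induction u using List.reverseRecOn with
  | nil => simp at hb
  | append_singleton u x ih =>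
    rw [mu_comp]
    by_cases hx : z = x
    · subst hx
      have e : mu [z] [z] = [z] := psi_self z
      rw [e]
      simp [hbz] at hb
      exact ih hb
    · have e : mu [x] [z] = [x] ++ [z] := psi_ne hx
      rw [e]
      exact mu_length_ge u ([x] ++ [z])

/-- If `o` occurs in `o :: u` only at the start then `mu (o::u) [o] = Pal (o::u)`. -/
theorem mu_once (u : List A) (o : A) (h : o ∉ u) : mu (o :: u) [o] = Pal (o :: u) := by
  rw [mu_cons, mu_new u o h, psi_append, psi_self, Pal_cons]

/-- Balance of a finite word. -/
def BalL (P : List A) : Prop := ∀ X Y : List A, X <:+: P → Y <:+: P → X.length ≤ Y.length →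
  ∀ a, X.count a ≤ Y.count a + 1

theorem infix_double (y : A) (v : List A) (h : y ∈ v) : [y, y] <:+: Pal (y :: v) := by
  rw [← mem_Pal, List.mem_iff_append] at h
  obtain ⟨s, t, h⟩ := h
  rw [Pal_cons, h, psi_append, psi_cons]
  obtain ⟨r, hr⟩ := psi_start y t
  exact ⟨psi y s, r, by simp [hr]⟩

theorem infix_sandwich (y z : A) (v : List A) (h : z ∈ v) (hz : z ≠ y) :
    [y, z, y] <:+: Pal (y :: v) := by
  rw [← mem_Pal, List.mem_iff_append] at h
  obtain ⟨s, t, h⟩ := h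
  rw [Pal_cons, h, psi_append, psi_cons]
  obtain ⟨r, hr⟩ := psi_start y t
  exact ⟨psi y s, r, by simp [hr, hz]⟩

theorem infix_single (z : A) (v : List A) (h : z ∈ v) : [z] <:+: Pal v := by
  rw [← mem_Pal, List.mem_iff_append] at h
  obtain ⟨s, t, h⟩ := h
  exact ⟨s, t, by simp [h]⟩

theorem count_mu_Pal (u : List A) (y z : A) (hy : y ∉ u) (hz : z ≠ y) :
    (mu u [z] ++ Pal u).count y = 0 := by
  rw [List.count_eq_zero]
  intro h
  rw [List.mem_append] at h
  rcases h with h | h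
  · rcases mem_mu _ _ _ h with h | h
    · exact hy h
    · simp at h; exact hz h.symm
  · exact hy ((mem_Pal _ _).1 h)

theorem lemA (u v : List A) (y z b : A) (hy : y ∉ u) (hz : z ≠ y) (hyv : y ∈ v) (hzv : z ∈ v)
    (hb : b ∈ u) (hbz : b ≠ z) (hbal : BalL (Pal (u ++ y :: v))) : False := by
  have h1 := infix_mu u _ _ (infix_double y v hyv)
  have h2 := infix_mu u _ _ (infix_single z (y :: v) (by simp [hzv]))
  have e : mu u [y, y] ++ Pal u = Pal u ++ (y :: Pal u ++ [y]) ++ Pal u := by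
    rw [show [y, y] = [y] ++ [y] from rfl, mu_append, mu_new u y hy]; simp
  rw [e] at h1
  have h3 : (y :: Pal u ++ [y]) <:+: Pal (u ++ y :: v) :=
    (List.infix_append (Pal u) _ (Pal u)).trans h1
  have h4 := mu_length_two u z b hb hbz
  have := hbal _ _ h3 h2 (by simp; omega) y
  rw [count_mu_Pal u y z hy hz] at this
  simp at this

theorem lemD (u v : List A) (y z o : A) (hy : y ∉ u) (hoy : o ≠ y) (hzy : z ≠ y)
    (hz : z ∉ u) (hov : o ∈ v) (hzv : z ∈ v)
    (hbal : BalL (Pal (u ++ y :: v))) : u.count o ≤ 1 := by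
  by_contra hc
  have h1 := infix_mu u _ _ (infix_sandwich y o v hov hoy)
  have h2 := infix_mu u _ _ (infix_single z (y :: v) (by simp [hzv]))
  have e : mu u [y, o, y] ++ Pal u =
      Pal u ++ (y :: (mu u [o] ++ Pal u) ++ [y]) ++ Pal u := by
    rw [show [y, o, y] = [y] ++ [o] ++ [y] from rfl, mu_append, mu_append, mu_new u y hy]; simp
  rw [e] at h1
  have h3 := (List.infix_append (Pal u) _ (Pal u)).trans h1
  have h4 := mu_gap u o z hz
  have := hbal _ _ h3 h2 (by simp; omega) y
  rw [count_mu_Pal u y z hy hzy] at this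
  simp at this

theorem lemE (u v : List A) (o x c : A) (ho : o ∉ u) (hx : x ∉ o :: u) (hc : c ∉ o :: u)
    (hcx : c ≠ x) (hov : o ∈ v) (hcv : c ∈ v)
    (hbal : BalL (Pal ((o :: u) ++ x :: o :: v))) : False := by
  have hxo : o ≠ x := by rintro rfl; simp at hx
  have hco : o ≠ c := by rintro rfl; simp at hc
  have h11 : [o, x, o] <:+: Pal (x :: o :: v) := by
    obtain ⟨s, t, h⟩ := infix_double o v hov
    rw [Pal_cons, ← h, psi_append, psi_append]
    refine ⟨psi x s ++ [x], psi x t ++ [x], ?_⟩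
    rw [psi_cons, psi_cons]
    simp [hxo]
  have h1 := infix_mu (o :: u) _ _ h11
  have h2 := infix_mu (o :: u) _ _ (infix_sandwich x c (o :: v) (by simp [hcv]) hcx)
  generalize hp : Pal (o :: u) = p at h1 h2
  have e1 : mu (o :: u) [o, x, o] = p ++ p ++ [x] ++ p := by
    rw [show [o, x, o] = [o] ++ [x] ++ [o] from rfl, mu_append, mu_append, mu_new _ x hx,
      mu_once u o ho, hp]; simp
  have e2 : mu (o :: u) [x, c, x] = p ++ [x] ++ p ++ [c] ++ p ++ [x] := by
    rw [show [x, c, x] = [x] ++ [c] ++ [x] from rfl, mu_append, mu_append, mu_new _ x hx,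
      mu_new _ c hc, hp]; simp
  obtain ⟨r, hr⟩ := psi_start o (Pal u)
  rw [← Pal_cons, hp] at hr
  have hr' : p = psi o (Pal u) ++ [o] := by rw [← hp, Pal_cons]
  have h3 : [o] ++ p ++ [x] ++ p ++ [o] <:+: Pal ((o :: u) ++ x :: o :: v) := by
    refine List.IsInfix.trans ⟨psi o (Pal u), r, ?_⟩ h1
    rw [e1]
    have : psi o (Pal u) ++ ([o] ++ p ++ [x] ++ p ++ [o]) ++ r =
      (psi o (Pal u) ++ [o]) ++ p ++ [x] ++ p ++ (o :: r) := by simp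
    rw [this, ← hr', ← hr]
  have h4 : [x] ++ p ++ [c] ++ p ++ [x] <:+: Pal ((o :: u) ++ x :: o :: v) := by
    refine List.IsInfix.trans ⟨p, p, ?_⟩ h2
    rw [e2]; simp
  have := hbal _ _ h3 h4 (by simp) o
  simp [List.count_append, hxo.symm, hco.symm] at this

/-! Segments of the directive sequence -/

/-- The segment of `D` of length `l` starting at `i`. -/
def seg (D : ℕ → A) (i l : ℕ) : List A := (List.range l).map (fun t => D (i + t))

@[simp] theorem seg_length (D : ℕ → A) (i l : ℕ) : (seg D i l).length = l := by simp [seg]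

theorem seg_zero_eq (D : ℕ → A) (l : ℕ) : seg D 0 l = (List.range l).map D := by simp [seg]

theorem seg_append (D : ℕ → A) (i l m : ℕ) :
    seg D i (l + m) = seg D i l ++ seg D (i + l) m := by
  simp [seg, List.range_add, Nat.add_assoc]

theorem seg_one (D : ℕ → A) (i : ℕ) : seg D i 1 = [D i] := by simp [seg]

theorem seg_cons (D : ℕ → A) (i l : ℕ) : seg D i (l + 1) = D i :: seg D (i + 1) l := by
  rw [Nat.add_comm l 1, seg_append, seg_one]; rfl

theorem mem_seg (D : ℕ → A) (i l : ℕ) (b : A) :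
    b ∈ seg D i l ↔ ∃ j, i ≤ j ∧ j < i + l ∧ D j = b := by
  simp only [seg, List.mem_map, List.mem_range]
  constructor
  · rintro ⟨t, ht, rfl⟩; exact ⟨i + t, by omega, by omega, rfl⟩
  · rintro ⟨j, h1, h2, rfl⟩; exact ⟨j - i, by omega, by congr 1; omega⟩

theorem seg_split (D : ℕ → A) (j l : ℕ) :
    seg D 0 (j + (l + 1)) = seg D 0 j ++ D j :: seg D (j + 1) l := by
  rw [seg_append, seg_cons, Nat.zero_add]

theorem seg_const (D : ℕ → A) (i m : ℕ) (c : A) (h : ∀ j ≥ i, D j = c) :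
    seg D i m = List.replicate m c := by
  rw [List.eq_replicate_iff]
  refine ⟨by simp, ?_⟩
  intro b hb
  rw [mem_seg] at hb
  obtain ⟨j, h1, _, rfl⟩ := hb
  exact h j h1

theorem seg_nodup (D : ℕ → A) (l : ℕ)
    (h : ∀ i i', i < l → i' < l → D i = D i' → i = i') : (seg D 0 l).Nodup := by
  rw [seg_zero_eq]
  refine List.Nodup.map_on ?_ List.nodup_range
  intro x hx y hy hxy
  exact h x y (List.mem_range.1 hx) (List.mem_range.1 hy) hxy

theorem lemA' (D : ℕ → A) (hbal : ∀ n, BalL (Pal (seg D 0 n))) (j i1 i2 i3 : ℕ)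
    (hj : ∀ i < j, D i ≠ D j) (h1 : j < i1) (h1' : D i1 = D j) (h2 : j < i2) (h2' : D i2 ≠ D j)
    (h3 : i3 < j) (h3' : D i3 ≠ D i2) : False := by
  have hb := hbal (j + ((i1 + i2) + 1))
  rw [seg_split] at hb
  refine lemA _ _ (D j) (D i2) (D i3) ?_ h2' ?_ ?_ ?_ h3' hb
  · rw [mem_seg]; rintro ⟨i, _, hi, h⟩; exact hj i (by omega) h
  · rw [mem_seg]; exact ⟨i1, by omega, by omega, h1'⟩
  · rw [mem_seg]; exact ⟨i2, by omega, by omega, rfl⟩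
  · rw [mem_seg]; exact ⟨i3, by omega, by omega, rfl⟩

theorem lemD' (D : ℕ → A) (hbal : ∀ n, BalL (Pal (seg D 0 n))) (J K m : ℕ)
    (hJ : ∀ i < J, D i ≠ D J) (hJK : J < K) (hK : ∀ i < K, D i ≠ D K)
    (hJ0 : D 0 ≠ D J) (hm : J < m) (hmo : D m = D 0) :
    ∀ i, 0 < i → i < J → D i ≠ D 0 := by
  intro i hi hiJ h
  have hb := hbal (J + ((K + m) + 1))
  rw [seg_split] at hb
  have := lemD _ _ (D J) (D K) (D 0) ?_ hJ0 (Ne.symm (hK J hJK)) ?_ ?_ ?_ hb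
  · obtain ⟨J', rfl⟩ : ∃ J', J = J' + 1 := ⟨J - 1, by omega⟩
    rw [seg_cons, List.count_cons_self] at this
    have h0 : List.count (D 0) (seg D (0 + 1) J') = 0 := by omega
    rw [List.count_eq_zero, mem_seg] at h0
    exact h0 ⟨i, by omega, by omega, h⟩
  · rw [mem_seg]; rintro ⟨i, _, hi, h⟩; exact hJ i (by omega) h
  · rw [mem_seg]; rintro ⟨i, _, hi, h⟩; exact hK i (by omega) h
  · rw [mem_seg]; exact ⟨m, by omega, by omega, hmo⟩
  · rw [mem_seg]; exact ⟨K, by omega, by omega, rfl⟩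

theorem lemE' (D : ℕ → A) (hbal : ∀ n, BalL (Pal (seg D 0 n))) (J K m : ℕ)
    (hJ : ∀ i < J, D i ≠ D J) (hJK : J + 1 < K) (hK : ∀ i < K, D i ≠ D K)
    (hJ0 : 0 < J) (h1 : D (J + 1) = D 0) (hm : J + 1 < m) (hmo : D m = D 0)
    (honce : ∀ i, 0 < i → i < J → D i ≠ D 0) : False := by
  have hb := hbal (J + ((K + m + 1) + 1))
  rw [seg_split, seg_cons, h1] at hb
  obtain ⟨J', rfl⟩ : ∃ J', J = J' + 1 := ⟨J - 1, by omega⟩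
  have e := seg_cons D 0 J'
  rw [e] at hb
  refine lemE _ _ (D 0) (D (J' + 1)) (D K) ?_ ?_ ?_ (Ne.symm (hK _ (by omega))) ?_ ?_ hb
  · rw [mem_seg]; rintro ⟨i, _, hi, h⟩; exact honce i (by omega) (by omega) h
  · rw [← e, mem_seg]; rintro ⟨i, _, hi, h⟩; exact hJ i (by omega) h
  · rw [← e, mem_seg]; rintro ⟨i, _, hi, h⟩; exact hK i (by omega) h
  · rw [mem_seg]; exact ⟨m, by omega, by omega, hmo⟩
  · rw [mem_seg]; exact ⟨K, by omega, by omega, rfl⟩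

theorem structure_thm (D : ℕ → A) (hbal : ∀ n, BalL (Pal (seg D 0 n))) (K j0 : ℕ)
    (hK : ∀ i < K, D i ≠ D K) (hall : ∀ i, ∃ i' ≤ K, D i' = D i)
    (hj0 : j0 < K) (hj0' : D j0 ≠ D 0) :
    ∃ J, 0 < J ∧ J < K ∧ (∀ i < J, D i ≠ D J) ∧
      ((K = J + 1 ∧ ∀ i ≥ K, D i = D K) ∨
       (K = J + 1 ∧ (∀ i i', i < K → i' < K → D i = D i' → i = i') ∧ ∀ i > K, D i = D 0) ∨
       (K = J + 2 ∧ (∀ i i', i < J + 1 → i' < J + 1 → D i = D i' → i = i') ∧ D (J + 1) = D 0 ∧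
          ∀ i ≥ K, D i = D K)) := by
  classical
  have hc0 : D 0 ≠ D K := hK 0 (by omega)
  -- letters other than the first one, occurring before `K`, occur once
  have P1 : ∀ i < K, D i ≠ D 0 → ∀ i', i' ≠ i → D i' ≠ D i := by
    intro i hi hi0 i' hne heq
    have hex : ∃ j, D j = D i := ⟨i, rfl⟩
    obtain ⟨j, hj, hjmin⟩ : ∃ j, D j = D i ∧ ∀ m < j, D m ≠ D i :=
      ⟨Nat.find hex, Nat.find_spec hex, fun m hm => Nat.find_min hex hm⟩
    have hji : j ≤ i := by
      by_contra h; exact hjmin i (by omega) rfl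
    have hji' : j ≤ i' := by
      by_contra h; exact hjmin i' (by omega) heq
    have hjpos : 0 < j := by
      rcases Nat.eq_zero_or_pos j with h | h
      · subst h; exact absurd hj.symm hi0
      · exact h
    obtain ⟨i1, h1, h1'⟩ : ∃ i1, j < i1 ∧ D i1 = D j := by
      by_cases h : j = i
      · exact ⟨i', by omega, by rw [heq, hj]⟩
      · exact ⟨i, by omega, hj.symm⟩
    exact lemA' D hbal j i1 K 0 (fun m hm => by rw [hj]; exact hjmin m hm) h1 h1' (by omega)
      (Ne.symm (hK j (by omega))) hjpos hc0
  have P2 : ∀ i, i > K → D i = D 0 ∨ D i = D K := by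
    intro i hi
    obtain ⟨i', hi', h⟩ := hall i
    by_cases h1 : i' = K
    · right; rw [← h, h1]
    · left
      by_contra h2
      exact P1 i' (by omega) (by rwa [h]) i (by omega) h.symm
  have P3 : ∀ i1 i2, i1 > K → i2 > K → D i1 = D K → D i2 = D 0 → False := by
    intro i1 i2 h1 h2 h3 h4
    exact lemA' D hbal K i1 i2 j0 hK h1 h3 h2 (by rw [h4]; exact hc0) hj0 (by rw [h4]; exact hj0')
  obtain ⟨J, hJK, hJ0, hJmax⟩ : ∃ J, J < K ∧ D J ≠ D 0 ∧ ∀ i, J < i → i < K → D i = D 0 := by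
    have hs := Nat.findGreatest_spec (P := fun i => i < K ∧ D i ≠ D 0) (n := K) hj0.le ⟨hj0, hj0'⟩
    refine ⟨_, hs.1, hs.2, ?_⟩
    intro i h1 h2
    have := Nat.findGreatest_is_greatest (P := fun i => i < K ∧ D i ≠ D 0) h1 h2.le
    by_contra h3
    exact this ⟨h2, h3⟩
  have hJpos : 0 < J := by
    rcases Nat.eq_zero_or_pos J with h | h
    · subst h; exact absurd rfl hJ0
    · exact h
  have hJ : ∀ i < J, D i ≠ D J := fun i hi => P1 J hJK hJ0 i (by omega)
  have inj : (∀ i, 0 < i → i < J → D i ≠ D 0) → ∀ i i', i < J + 1 → i' < J + 1 →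
      D i = D i' → i = i' := by
    intro ho i i' hi hi' h
    by_contra hne
    by_cases h0 : D i = D 0
    · have h00 : D i' = D 0 := by rw [← h, h0]
      have a1 : ¬ (0 < i) := by
        intro hp
        rcases Nat.lt_succ_iff_lt_or_eq.1 hi with h1 | h1
        · exact ho i hp h1 h0
        · exact hJ0 (h1 ▸ h0)
      have a2 : ¬ (0 < i') := by
        intro hp
        rcases Nat.lt_succ_iff_lt_or_eq.1 hi' with h1 | h1
        · exact ho i' hp h1 h00
        · exact hJ0 (h1 ▸ h00)
      omega
    · exact P1 i (by omega) h0 i' (by omega) h.symm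
  refine ⟨J, hJpos, hJK, hJ, ?_⟩
  by_cases hcase : ∃ i, i > K ∧ D i = D 0
  · obtain ⟨m, hm, hmo⟩ := hcase
    have hD := lemD' D hbal J K m hJ hJK hK hJ0.symm (by omega) hmo
    have hKJ : K = J + 1 := by
      by_contra hne
      exact lemE' D hbal J K m hJ (by omega) hK hJpos (hJmax _ (by omega) (by omega)) (by omega)
        hmo hD
    right; left
    refine ⟨hKJ, ?_, ?_⟩
    · rw [hKJ]; exact inj hD
    · intro i hi
      rcases P2 i hi with h | h
      · exact h
      · exact (P3 i m hi hm h hmo).elim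
  · have htail : ∀ i ≥ K, D i = D K := by
      intro i hi
      by_cases h : i = K
      · rw [h]
      · rcases P2 i (by omega) with h1 | h1
        · exact (hcase ⟨i, by omega, h1⟩).elim
        · exact h1
    by_cases hKJ : K = J + 1
    · exact Or.inl ⟨hKJ, htail⟩
    · right; right
      have h1 : D (J + 1) = D 0 := hJmax _ (by omega) (by omega)
      have hD := lemD' D hbal J K (J + 1) hJ hJK hK hJ0.symm (by omega) h1
      have hKJ2 : K = J + 2 := by
        by_contra hne
        exact lemE' D hbal J K (J + 2) hJ (by omega) hK hJpos h1 (by omega)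
          (hJmax _ (by omega) (by omega)) hD
      exact ⟨hKJ2, inj hD, h1, htail⟩

/-! Periodic words -/

theorem Pal_replicate (c : A) (m : ℕ) : Pal (List.replicate m c) = List.replicate m c := by
  induction m with
  | zero => rfl
  | succ m ih =>
    rw [List.replicate_succ, Pal_cons, ih]
    have : ∀ n, psi c (List.replicate n c) = List.replicate n c := by
      intro n
      induction n with
      | zero => rfl
      | succ n ih => rw [List.replicate_succ, psi_cons, ih]; simp
    rw [this, ← List.replicate_succ, List.replicate_succ']

theorem mu_replicate (u : List A) (c : A) (m : ℕ) :
    mu u (List.replicate m c) = (List.replicate m (mu u [c])).flatten := by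
  induction m with
  | zero => simp [mu_empty]
  | succ m ih =>
    rw [List.replicate_succ, List.replicate_succ, List.flatten_cons, ← ih, ← mu_append]; rfl

theorem Pal_tail (u : List A) (c : A) (m : ℕ) : Pal (u ++ List.replicate m c) =
    (List.replicate m (mu u [c])).flatten ++ Pal u := by
  rw [Pal_append, Pal_replicate, mu_replicate]

theorem flatten_getD (w : List A) (d : A) (_hw : w ≠ []) : ∀ (m n : ℕ) (r : List A),
    n < m * w.length →
    ((List.replicate m w).flatten ++ r).getD n d = w.getD (n % w.length) d := by
  intro m
  induction m with
  | zero => intro n r h; simp at h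
  | succ m ih =>
    intro n r h
    rw [List.replicate_succ, List.flatten_cons, List.append_assoc]
    by_cases hn : n < w.length
    · rw [List.getD_append _ _ _ _ hn, Nat.mod_eq_of_lt hn]
    · rw [List.getD_append_right _ _ _ _ (by omega), ih _ _ (by rw [Nat.succ_mul] at h; omega)]
      rw [← Nat.mod_eq_sub_mod (by omega)]

theorem periodic_of (t D : ℕ → A) (ht : IsStdEpisturmian t D) (K : ℕ) (c d : A)
    (htail : ∀ i ≥ K, D i = c) : t = perW (mu (seg D 0 K) [c]) d := by
  funext n
  have h := ht (K + (n + 1))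
  rw [← seg_zero_eq, seg_append, Nat.zero_add, seg_const D K _ c htail, Pal_tail] at h
  have hl : 1 ≤ (mu (seg D 0 K) [c]).length := mu_length_ge _ [c]
  generalize mu (seg D 0 K) [c] = w at *
  have hw : w ≠ [] := by rintro rfl; simp at hl
  have hlt : n < (n + 1) * w.length := by nlinarith
  have := flatten_getD w d hw (n + 1) n (Pal (seg D 0 K)) hlt
  unfold perW
  rw [← this]
  unfold IsPrefixOf at h
  generalize hP : (List.replicate (n + 1) w).flatten ++ Pal (seg D 0 K) = P at *
  have hPl : n < P.length := by
    rw [← hP, List.length_append, List.length_flatten]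
    simp
    nlinarith
  rw [h, List.getD_eq_getElem _ _ (by simpa using hPl)]
  simp

theorem perW_rotate (u v : List A) (d : A) (n : ℕ) :
    perW (u ++ v) d (u.length + n) = perW (v ++ u) d n := by
  unfold perW
  by_cases h0 : u.length + v.length = 0
  · have h1 : u = [] := List.length_eq_zero_iff.1 (by omega)
    have h2 : v = [] := List.length_eq_zero_iff.1 (by omega)
    simp [h1, h2]
  · simp only [List.length_append]
    rw [Nat.add_comm v.length, Nat.add_mod u.length n]
    set r := n % (u.length + v.length) with hr
    have hr' : r < u.length + v.length := Nat.mod_lt _ (by omega)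
    by_cases hv : v.length = 0
    · have h2 : v = [] := List.length_eq_zero_iff.1 hv
      subst h2
      simp at hr' ⊢
      rw [Nat.mod_eq_of_lt hr']
    · rw [Nat.mod_eq_of_lt (a := u.length) (by omega)]
      by_cases h : r < v.length
      · rw [Nat.mod_eq_of_lt (by omega), List.getD_append_right _ _ _ _ (by omega),
          List.getD_append _ _ _ _ h]
        congr 1; omega
      · rw [Nat.mod_eq_sub_mod (by omega), Nat.mod_eq_of_lt (by omega),
          List.getD_append_right v u _ _ (by omega), List.getD_append _ _ _ _ (by omega)]
        congr 1; omega

theorem factor_rotate_aux (u v : List A) (d : A) (X : List A)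
    (h : IsFactorOf X (perW (v ++ u) d)) : IsFactorOf X (perW (u ++ v) d) := by
  obtain ⟨i, hi⟩ := h
  refine ⟨u.length + i, hi.trans ?_⟩
  congr 1
  funext j
  rw [Nat.add_assoc, perW_rotate]

theorem factor_rotate (u v : List A) (d : A) (X : List A) :
    IsFactorOf X (perW (v ++ u) d) ↔ IsFactorOf X (perW (u ++ v) d) :=
  ⟨factor_rotate_aux u v d X, factor_rotate_aux v u d X⟩

/-! Factors -/

theorem factor_of_prefix {X : List A} {t : ℕ → A} (h : IsPrefixOf X t) : IsFactorOf X t :=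
  ⟨0, by simpa [IsPrefixOf] using h⟩

theorem factor_infix {X Y : List A} {t : ℕ → A} (h : X <:+: Y) (hY : IsFactorOf Y t) :
    IsFactorOf X t := by
  obtain ⟨a, b, rfl⟩ := h
  obtain ⟨i, hi⟩ := hY
  refine ⟨i + a.length, ?_⟩
  have e : ∀ p q : ℕ, (List.range (p + q)).map (fun j => t (i + j)) =
      (List.range p).map (fun j => t (i + j)) ++ (List.range q).map (fun j => t (i + p + j)) :=
    fun p q => by simp [List.range_add, Nat.add_assoc]
  rw [List.length_append, e, List.length_append, e] at hi
  have h1 := (List.append_inj hi (by simp)).1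
  exact (List.append_inj h1 (by simp)).2

theorem bal_of (s t D : ℕ → A) (hbal : IsBalanced s) (ht : IsStdEpisturmian t D)
    (hF : ∀ u : List A, IsFactorOf u s ↔ IsFactorOf u t) (n : ℕ) : BalL (Pal (seg D 0 n)) := by
  intro X Y hX hY hl a
  have hp := factor_of_prefix (ht n)
  rw [← seg_zero_eq] at hp
  have hY' : Y.take X.length <:+: Pal (seg D 0 n) := (List.take_prefix _ _).isInfix.trans hY
  have := hbal X (Y.take X.length) ((hF _).2 (factor_infix hX hp)) ((hF _).2 (factor_infix hY' hp))
    (by simp [hl]) a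
  exact this.trans (Nat.add_le_add_right ((List.take_sublist _ _).count_le a) 1)

theorem range_eq (s t D : ℕ → A) (ht : IsStdEpisturmian t D)
    (hF : ∀ u : List A, IsFactorOf u s ↔ IsFactorOf u t) : Set.range s = Set.range D := by
  have single : ∀ (b : A) (r : ℕ → A), IsFactorOf [b] r ↔ b ∈ Set.range r := by
    intro b r
    simp [IsFactorOf, eq_comm]
  ext b
  rw [← single, hF, single]
  constructor
  · rintro ⟨n, rfl⟩
    have h := ht (n + 1)
    rw [← seg_zero_eq] at h
    have hl := Pal_length_ge (seg D 0 (n + 1))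
    simp at hl
    have : t n ∈ Pal (seg D 0 (n + 1)) := by
      rw [h]
      simp
      exact ⟨n, by omega, rfl⟩
    rw [mem_Pal, mem_seg] at this
    obtain ⟨j, _, _, hj⟩ := this
    exact ⟨j, hj⟩
  · rintro ⟨n, rfl⟩
    rw [← single]
    refine factor_infix ?_ (factor_of_prefix (ht (n + 1)))
    rw [← seg_zero_eq]
    exact infix_single _ _ ((mem_seg _ _ _ _).2 ⟨n, by omega, by omega, rfl⟩)

theorem freq_contra (s t : ℕ → A) (f : A → ℝ) (hbal : IsBalanced s)
    (hF : ∀ u : List A, IsFactorOf u s ↔ IsFactorOf u t) (w : List A) (x c : A) (hw : w ≠ [])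
    (ht : ∀ m, IsPrefixOf (List.replicate m w).flatten t) (hcount : w.count x = w.count c)
    (hfx : Filter.Tendsto (fun n : ℕ => (((List.range n).map s).count x : ℝ) / n)
      Filter.atTop (nhds (f x)))
    (hfc : Filter.Tendsto (fun n : ℕ => (((List.range n).map s).count c : ℝ) / n)
      Filter.atTop (nhds (f c))) : f x = f c := by
  have hlen : 0 < w.length := List.length_pos_iff.2 hw
  have hsub : Filter.Tendsto (fun m : ℕ => m * w.length) Filter.atTop Filter.atTop :=
    Filter.tendsto_id.atTop_mul_const' hlen
  have h1 := (hfx.comp hsub).sub (hfc.comp hsub)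
  have h2 : Filter.Tendsto (fun m : ℕ => (2 : ℝ) / ((m * w.length : ℕ) : ℝ)) Filter.atTop
      (nhds 0) := (tendsto_const_div_atTop_nhds_zero_nat (2 : ℝ)).comp hsub
  have h3 := squeeze_zero_norm  
    (f := fun m : ℕ => (((List.range (m * w.length)).map s).count x : ℝ) / (m * w.length : ℕ) -
      (((List.range (m * w.length)).map s).count c : ℝ) / (m * w.length : ℕ))
    (a := fun m : ℕ => (2 : ℝ) / ((m * w.length : ℕ) : ℝ)) ?_ h2
  · exact sub_eq_zero.1 (tendsto_nhds_unique h1 h3)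
  · intro m
    rw [← sub_div, norm_div, Real.norm_natCast]
    refine div_le_div_of_nonneg_right ?_ (Nat.cast_nonneg _)
    set p := (List.range (m * w.length)).map s with hp
    set q := (List.replicate m w).flatten with hq
    have hps : IsFactorOf p s := factor_of_prefix (by simp [IsPrefixOf, hp])
    have hqs : IsFactorOf q s := (hF _).2 (factor_of_prefix (ht m))
    have hl : p.length = q.length := by simp [hp, hq, List.length_flatten]
    have hqc : q.count x = q.count c := by
      simp [hq, List.count_flatten, hcount]
    have b1 := hbal p q hps hqs hl x
    have b2 := hbal q p hqs hps hl.symm x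
    have b3 := hbal p q hps hqs hl c
    have b4 := hbal q p hqs hps hl.symm c
    rw [Real.norm_eq_abs, abs_le]
    have c1 : p.count x ≤ p.count c + 2 := by omega
    have c2 : p.count c ≤ p.count x + 2 := by omega
    have c1' : (p.count x : ℝ) ≤ p.count c + 2 := by exact_mod_cast c1
    have c2' : (p.count c : ℝ) ≤ p.count x + 2 := by exact_mod_cast c2
    constructor <;> linarith

/-- Repackaging a duplicate-free list as a sequence of letters. -/
theorem finish (s : ℕ → A) (k : ℕ) (hcard : (Set.range s).ncard = k) (L : List A)
    (hL : L.Nodup) (hmem : ∀ b, b ∈ L ↔ b ∈ Set.range s) (d : A)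
    (hF : ∀ d u, IsFactorOf u s ↔ IsFactorOf u (perW (Pal L) d)) :
    ∃ a : ℕ → A, Set.InjOn a (Set.Iio k) ∧
      ∀ u : List A, IsFactorOf u s ↔
        IsFactorOf u (perW (Pal ((List.range k).map a)) (a 0)) := by
  have hlen : L.length = k := by
    have : Set.range s = ↑L.toFinset := by ext b; simp [← hmem]
    rw [← hcard, this, Set.ncard_coe_finset, List.toFinset_card_of_nodup hL]
  have hmap : (List.range k).map (fun i => L.getD i d) = L := by
    apply List.ext_getElem
    · simp [hlen]
    · intro i h1 h2
      simp [h2]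
  refine ⟨fun i => L.getD i d, ?_, ?_⟩
  · intro i hi j hj h
    simp only [Set.mem_Iio] at hi hj
    simp only at h
    rw [List.getD_eq_getElem _ _ (by omega), List.getD_eq_getElem _ _ (by omega)] at h
    exact (hL.getElem_inj_iff).1 h
  · rw [hmap]; exact hF _

theorem exists_last (D : ℕ → A) (hfin : (Set.range D).Finite) :
    ∃ K, (∀ i < K, D i ≠ D K) ∧ (∀ i, ∃ i' ≤ K, D i' = D i) := by
  classical
  have hex : ∃ N, ∀ i, ∃ i' ≤ N, D i' = D i := by
    have : ∀ b : A, ∃ i, b ∈ Set.range D → D i = b := by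
      intro b
      by_cases hb : b ∈ Set.range D
      · obtain ⟨i, hi⟩ := hb; exact ⟨i, fun _ => hi⟩
      · exact ⟨0, fun h => (hb h).elim⟩
    choose g hg using this
    refine ⟨hfin.toFinset.sup g, fun i => ⟨g (D i), ?_, hg _ ⟨i, rfl⟩⟩⟩
    exact Finset.le_sup (f := g) (by simp)
  refine ⟨Nat.find hex, ?_, Nat.find_spec hex⟩
  intro i hi h
  refine Nat.find_min hex (m := Nat.find hex - 1) (by omega) ?_
  intro j
  obtain ⟨i', hi', hj⟩ := Nat.find_spec hex j
  by_cases he : i' = Nat.find hex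
  · exact ⟨i, by omega, by rw [h, ← hj, ← he]⟩
  · exact ⟨i', by omega, hj⟩

theorem main (s : ℕ → A) (k : ℕ) (f : A → ℝ)
    (hbal : IsBalanced s)
    (hepi : ∃ t Δ : ℕ → A, IsStdEpisturmian t Δ ∧
      ∀ u : List A, IsFactorOf u s ↔ IsFactorOf u t)
    (hk : 3 ≤ k) (hcard : (Set.range s).ncard = k)
    (hfreq : ∀ a ∈ Set.range s, Filter.Tendsto
      (fun n : ℕ => (((List.range n).map s).count a : ℝ) / n)
      Filter.atTop (nhds (f a)))
    (hdist : ∀ a ∈ Set.range s, ∀ b ∈ Set.range s, a ≠ b → f a ≠ f b) :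
    ∃ a : ℕ → A, Set.InjOn a (Set.Iio k) ∧
      ∀ u : List A, IsFactorOf u s ↔
        IsFactorOf u (perW (Pal ((List.range k).map a)) (a 0)) := by
  obtain ⟨t, D, ht, hF⟩ := hepi
  have hB := bal_of s t D hbal ht hF
  have hR := range_eq s t D ht hF
  have hfin : (Set.range D).Finite := by
    rw [← hR]; exact Set.finite_of_ncard_ne_zero (by omega)
  obtain ⟨K, hK, hall⟩ := exists_last D hfin
  obtain ⟨j0, hj0, hj0'⟩ : ∃ j0, j0 < K ∧ D j0 ≠ D 0 := by
    by_contra hno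
    push Not at hno
    have hsub : Set.range D ⊆ ({D 0, D K} : Set A) := by
      rintro _ ⟨i, rfl⟩
      obtain ⟨i', hi', h⟩ := hall i
      by_cases he : i' = K
      · right; rw [← h, he]; rfl
      · left; rw [← h]; exact hno i' (by omega)
    have h1 := Set.ncard_le_ncard hsub (by simp)
    have h2 : ({D 0, D K} : Set A).ncard ≤ 2 := by
      have := Set.ncard_insert_le (D 0) ({D K} : Set A)
      rw [Set.ncard_singleton] at this
      exact this
    rw [← hR] at h1
    omega
  have hmemR : ∀ i, D i ∈ Set.range s := fun i => by rw [hR]; exact ⟨i, rfl⟩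
  obtain ⟨J, hJ0, hJK, hJ, hcases⟩ := structure_thm D hB K j0 hK hall hj0 hj0'
  have hcK : D K ∉ seg D 0 K := by
    rw [mem_seg]; rintro ⟨i, _, hi, h⟩; exact hK i (by omega) h
  have hxJ : D J ∉ seg D 0 J := by
    rw [mem_seg]; rintro ⟨i, _, hi, h⟩; exact hJ i (by omega) h
  rcases hcases with ⟨hKJ, htail⟩ | ⟨hKJ, hinj, htail⟩ | ⟨hKJ, hinj, h1, htail⟩
  · exfalso
    have hne : D J ≠ D K := hK J hJK
    refine hdist _ (hmemR J) _ (hmemR K) hne ?_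
    refine freq_contra s t f hbal hF (mu (seg D 0 K) [D K]) (D J) (D K) ?_ ?_ ?_
      (hfreq _ (hmemR J)) (hfreq _ (hmemR K))
    · rw [mu_new _ _ hcK]; simp
    · intro m
      have h := ht (K + m)
      rw [← seg_zero_eq, seg_append, Nat.zero_add, seg_const D K _ _ htail, Pal_tail] at h
      unfold IsPrefixOf at h ⊢
      rw [List.length_append, List.range_add, List.map_append] at h
      exact (List.append_inj h (by simp)).1
    · have e : seg D 0 K = seg D 0 J ++ [D J] := by
        rw [hKJ, seg_append, seg_one, Nat.zero_add]
      rw [mu_new _ _ hcK, List.count_append, List.count_append]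
      have z1 : List.count (D K) (Pal (seg D 0 K)) = 0 := by
        rw [List.count_eq_zero, mem_Pal]; exact hcK
      have z2 : List.count (D J) (Pal (seg D 0 J)) = 0 := by
        rw [List.count_eq_zero, mem_Pal]; exact hxJ
      rw [z1, e, Pal_append]
      have e2 : Pal [D J] = [D J] := Pal_replicate (D J) 1
      rw [e2, mu_new _ _ hxJ, List.count_append, List.count_append, z2]
      simp [hne.symm]
  · have hinj' : ∀ i i', i < K + 1 → i' < K + 1 → D i = D i' → i = i' := by
      intro i i' hi hi' h
      by_cases h1 : i = K
      · by_cases h2 : i' = K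
        · omega
        · subst h1; exact absurd h.symm (hK i' (by omega))
      · by_cases h2 : i' = K
        · subst h2; exact absurd h (hK i (by omega))
        · exact hinj i i' (by omega) (by omega) h
    refine finish s k hcard (seg D 0 (K + 1)) (seg_nodup _ _ hinj') ?_ (D 0) ?_
    · intro b
      rw [hR, mem_seg]
      constructor
      · rintro ⟨j, _, _, h⟩; exact ⟨j, h⟩
      · rintro ⟨j, rfl⟩
        obtain ⟨i', hi', h⟩ := hall j
        exact ⟨i', by omega, by omega, h⟩
    · intro d u
      rw [hF, periodic_of t D ht (K + 1) (D 0) d (fun i hi => htail i (by omega))]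
      rw [seg_cons, mu_once]
      rw [mem_seg]
      rintro ⟨i, hi, hi', h⟩
      have := hinj' i 0 (by omega) (by omega) h
      omega
  · have hcv : D K ∉ seg D 0 (J + 1) := by
      rw [mem_seg]; rintro ⟨i, _, hi, h⟩; exact hK i (by omega) h
    refine finish s k hcard (seg D 0 (J + 1) ++ [D K]) ?_ ?_ (D 0) ?_
    · rw [List.nodup_append]
      refine ⟨seg_nodup _ _ hinj, by simp, ?_⟩
      intro a ha b hb hab
      simp at hb
      subst hb
      exact hcv (hab ▸ ha)
    · intro b
      rw [hR, List.mem_append, mem_seg]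
      constructor
      · rintro (⟨j, _, _, h⟩ | h)
        · exact ⟨j, h⟩
        · simp at h; exact ⟨K, h.symm⟩
      · rintro ⟨j, rfl⟩
        obtain ⟨i', hi', h⟩ := hall j
        by_cases h2 : i' = K
        · right; rw [← h, h2]; simp
        · left
          by_cases h3 : i' = J + 1
          · exact ⟨0, by omega, by omega, by rw [← h, h3, h1]⟩
          · exact ⟨i', by omega, by omega, h⟩
    · intro d u
      rw [hF, periodic_of t D ht K (D K) d htail, mu_new _ _ hcK]
      have e : seg D 0 K = seg D 0 (J + 1) ++ [D 0] := by
        rw [hKJ, seg_append D 0 (J + 1) 1, seg_one, Nat.zero_add, h1]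
      have e2 : ∀ a : A, Pal [a] = [a] := fun a => Pal_replicate a 1
      have e3 : mu (seg D 0 (J + 1)) [D 0] = Pal (seg D 0 (J + 1)) := by
        rw [seg_cons, mu_once]
        rw [mem_seg]
        rintro ⟨i, hi, hi', h⟩
        have := hinj i 0 (by omega) (by omega) h
        omega
      rw [e, Pal_append, Pal_append, e2, e2, e3, mu_new _ _ hcv, List.append_assoc, factor_rotate]

end Fraenkel

/-- Fraenkel's conjecture for episturmian sequences: a balanced episturmian sequence
over exactly `k ≥ 3` letters whose letter frequencies exist and are pairwise distinct
has the same factors as `(Pal(a₁⋯a_k))^ω` for some pairwise distinct letters. -/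
theorem fraenkel_for_episturmian {A : Type*} [DecidableEq A]
    (s : ℕ → A) (k : ℕ) (f : A → ℝ)
    (hbal : IsBalanced s)
    (hepi : ∃ t Δ : ℕ → A, IsStdEpisturmian t Δ ∧
      ∀ u : List A, IsFactorOf u s ↔ IsFactorOf u t)
    (hk : 3 ≤ k) (hcard : (Set.range s).ncard = k)
    (hfreq : ∀ a ∈ Set.range s, Filter.Tendsto
      (fun n : ℕ => (((List.range n).map s).count a : ℝ) / n)
      Filter.atTop (nhds (f a)))
    (hdist : ∀ a ∈ Set.range s, ∀ b ∈ Set.range s, a ≠ b → f a ≠ f b) :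
    ∃ a : ℕ → A, Set.InjOn a (Set.Iio k) ∧
      ∀ u : List A, IsFactorOf u s ↔
        IsFactorOf u (perW (Pal ((List.range k).map a)) (a 0)) := by
  exact Fraenkel.main s k f hbal hepi hk hcard hfreq hdist
end

section
/- Let a₁,…,a_{k+ℓ} be pairwise distinct letters of an alphabet A with k ≥ 2 and ℓ ≥ 1, and let s be the standard episturmian sequence with directive sequence Δ = a₁·a₂⋯a_{k−1}·a₁·a_k⋯a_{k+ℓ−1}·(a_{k+ℓ})^ω. Then s is balanced. -/
/-- Truncated 2-adic valuation. -/
def tval : ℕ → ℕ → ℕ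
  | 0, _ => 0
  | K + 1, n => if n % 2 = 1 then 0 else tval K (n / 2) + 1

theorem tval_le (K n : ℕ) : tval K n ≤ K := by
  induction K generalizing n with
  | zero => simp [tval]
  | succ K ih =>
    rw [tval]; split_ifs
    · omega
    · have := ih (n / 2); omega

theorem tval_symm_lt (K j n : ℕ) (h0 : 0 < n) (h1 : n < 2 ^ j) :
    tval K (2 ^ j - n) = tval K n := by
  induction K generalizing n j with
  | zero => simp [tval]
  | succ K ih =>
    cases j with
    | zero => simp at h1; omega
    | succ j =>
      rw [pow_succ] at h1 ⊢
      rw [tval, tval]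
      by_cases h : n % 2 = 1
      · rw [if_pos h, if_pos (by omega)]
      · rw [if_neg h, if_neg (by omega), ← ih j (n / 2) (by omega) (by omega)]
        congr 2; omega

theorem tval_symm_mul (K c n : ℕ) (h1 : n ≤ 2 ^ K * c) :
    tval K (2 ^ K * c - n) = tval K n := by
  induction K generalizing n with
  | zero => simp [tval]
  | succ K ih =>
    have e : 2 ^ (K + 1) * c = 2 * (2 ^ K * c) := by ring
    rw [e] at h1 ⊢
    rw [tval, tval]
    by_cases h : n % 2 = 1
    · rw [if_pos h, if_pos (by omega)]
    · rw [if_neg h, if_neg (by omega), ← ih (n / 2) (by omega)]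
      congr 2; omega

theorem tval_lt_iff (K i n : ℕ) (hi : i < K) : tval K n = i ↔ n % 2 ^ (i + 1) = 2 ^ i := by
  induction K generalizing n i with
  | zero => omega
  | succ K ih =>
    rw [tval]
    have hn : n = 2 * (n / 2) + n % 2 := by omega
    cases i with
    | zero => simp
    | succ i =>
      have e : 2 ^ (i + 1 + 1) = 2 * 2 ^ (i + 1) := by ring
      have e' : 2 ^ (i + 1) = 2 * 2 ^ i := by ring
      by_cases h : n % 2 = 1
      · rw [if_pos h]
        have : n % 2 ^ (i + 1 + 1) % 2 = n % 2 := Nat.mod_mod_of_dvd _ ⟨_, e⟩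
        constructor
        · omega
        · intro h2; rw [h2, e'] at this; omega
      · rw [if_neg h]
        have h3 : n = 2 * (n / 2) := by omega
        rw [Nat.add_right_cancel_iff, ih i _ (by omega)]
        conv_rhs => rw [h3, e, Nat.mul_mod_mul_left]
        omega

theorem tval_dvd (K n : ℕ) : 2 ^ tval K n ∣ n := by
  induction K generalizing n with
  | zero => simp [tval]
  | succ K ih =>
    rw [tval]
    by_cases h : n % 2 = 1
    · simp [h]
    · rw [if_neg h, pow_succ']
      have h3 : n = 2 * (n / 2) := by omega
      conv_rhs => rw [h3]
      exact Nat.mul_dvd_mul_left _ (ih _)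

theorem tval_eq_top_iff (K n : ℕ) : tval K n = K ↔ n % 2 ^ K = 0 := by
  constructor
  · intro h
    have := tval_dvd K n
    rw [h] at this
    exact Nat.mod_eq_zero_of_dvd this
  · intro h
    by_contra h2
    have h3 : tval K n < K := lt_of_le_of_ne (tval_le K n) h2
    have h4 := (tval_lt_iff K _ n h3).1 rfl
    have h5 : 2 ^ (tval K n + 1) ∣ n :=
      (pow_dvd_pow 2 h3).trans (Nat.dvd_of_mod_eq_zero h)
    rw [Nat.mod_eq_zero_of_dvd h5] at h4
    have := Nat.one_le_two_pow (n := tval K n)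
    omega

theorem tval_pow (K m : ℕ) (h : m ≤ K) : tval K (2 ^ m) = m := by
  rcases h.lt_or_eq with h | h
  · rw [tval_lt_iff _ _ _ h]
    exact Nat.mod_eq_of_lt (Nat.pow_lt_pow_right (by norm_num) (by omega))
  · subst h; rw [tval_eq_top_iff]; simp

theorem tval_lt_of_lt (K m n : ℕ) (h0 : 0 < n) (h : n < 2 ^ m) : tval K n < m := by
  have := Nat.le_of_dvd h0 (tval_dvd K n)
  exact (Nat.pow_lt_pow_iff_right (by norm_num : 1 < 2)).1 (lt_of_le_of_lt this h)

/-- Closure of a prefix of `f` in terms of symmetry of `f`. -/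
theorem palClosure_step {A : Type*} [DecidableEq A] (f : ℕ → A) (L i : ℕ) (hi : i ≤ L)
    (H1 : ∀ t, t ≤ L + i → f t = f (L + i - t))
    (H2 : ∀ j, j < i → ∃ t, j ≤ t ∧ t ≤ L ∧ f t ≠ f (L + j - t)) :
    palClosure ((List.range L).map f ++ [f L]) = (List.range (L + 1 + i)).map f := by
  have e : (List.range L).map f ++ [f L] = (List.range (L + 1)).map f := by
    rw [List.range_succ]; simp
  rw [e]
  unfold palClosure
  have key : ∀ h : ∃ i, (((List.range (L + 1)).map f).drop i).reverse
      = ((List.range (L + 1)).map f).drop i, Nat.find h = i := by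
    intro h
    rw [Nat.find_eq_iff]
    constructor
    · apply List.ext_getElem
      · simp
      · intro n h1 h2
        simp at h1 h2 ⊢
        rw [H1 _ (by omega)]
        congr 1; omega
    · intro j hj hp
      obtain ⟨t, ht1, ht2, ht3⟩ := H2 j hj
      apply ht3
      have := congrArg (fun l => l[t - j]?) hp
      try simp only at this
      rw [List.getElem?_eq_getElem (by simp; omega), List.getElem?_eq_getElem (by simp; omega)] at this
      simp at this
      rw [show j + (t - j) = t by omega] at this
      rw [← this]
      congr 1; omega
  rw [key]
  apply List.ext_getElem
  · simp; omega
  · intro n h1 h2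
    simp at h1 h2
    by_cases hn : n < L + 1
    · rw [List.getElem_append_left (by simpa using hn)]; simp
    · rw [List.getElem_append_right (by simpa using hn)]
      simp
      rw [H1 n (by omega)]
      congr 1; omega

theorem Pal_range_succ {A : Type*} [DecidableEq A] (D : ℕ → A) (m : ℕ) :
    Pal ((List.range (m + 1)).map D) = palClosure (Pal ((List.range m).map D) ++ [D m]) := by
  unfold Pal
  rw [List.range_succ, List.map_append, List.foldl_append]
  rfl

/-- Index of the letter at (one-based) position `n`; here `k = K + 2`. -/
def lidx (K ℓ n : ℕ) : ℕ :=
  if n % (2 ^ (K + 2) - 1) = 0 then K + 1 + tval ℓ (n / (2 ^ (K + 2) - 1))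
  else tval (K + 1) (if n % (2 ^ (K + 2) - 1) ≤ 2 ^ (K + 1) - 1 then n % (2 ^ (K + 2) - 1)
    else n % (2 ^ (K + 2) - 1) - (2 ^ (K + 1) - 1))

theorem powfact (K : ℕ) : 2 ^ (K + 2) = 2 * 2 ^ (K + 1) ∧ 2 ^ (K + 1) = 2 * 2 ^ K ∧ 1 ≤ 2 ^ K :=
  ⟨by ring, by ring, Nat.one_le_two_pow⟩

theorem lidx_small (K ℓ n : ℕ) (h0 : 0 < n) (h : n < 2 ^ (K + 1)) :
    lidx K ℓ n = tval (K + 1) n := by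
  have := powfact K
  unfold lidx
  rw [Nat.mod_eq_of_lt (by omega), if_neg (by omega), if_pos (by omega)]

theorem lidx_mul (K ℓ m : ℕ) :
    lidx K ℓ ((2 ^ (K + 2) - 1) * m) = K + 1 + tval ℓ m := by
  have := powfact K
  unfold lidx
  rw [Nat.mul_mod_right, if_pos rfl, Nat.mul_div_cancel_left _ (by omega)]

theorem lidx_lt (K ℓ n : ℕ) (h : n % (2 ^ (K + 2) - 1) ≠ 0) : lidx K ℓ n < K + 1 := by
  have := powfact K
  have := Nat.mod_lt n (show 2 ^ (K + 2) - 1 > 0 by omega)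
  unfold lidx
  rw [if_neg h]
  apply tval_lt_of_lt
  · split_ifs <;> omega
  · split_ifs <;> omega

theorem lidx_bound (K ℓ n : ℕ) : lidx K ℓ n < K + 2 + ℓ := by
  by_cases h : n % (2 ^ (K + 2) - 1) = 0
  · have := tval_le ℓ (n / (2 ^ (K + 2) - 1))
    unfold lidx
    rw [if_pos h]; omega
  · have := lidx_lt K ℓ n h
    omega

theorem lidx_congr (K ℓ n n' : ℕ) (h : n % (2 ^ (K + 2) - 1) ≠ 0)
    (h' : (n + n') % (2 ^ (K + 2) - 1) = 0) : lidx K ℓ n = lidx K ℓ n' := by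
  have hp := powfact K
  have a1 := Nat.mod_lt n (show 2 ^ (K + 2) - 1 > 0 by omega)
  have a2 := Nat.mod_lt n' (show 2 ^ (K + 2) - 1 > 0 by omega)
  have key : n % (2 ^ (K + 2) - 1) + n' % (2 ^ (K + 2) - 1) = 2 ^ (K + 2) - 1 := by
    rw [Nat.add_mod] at h'
    obtain ⟨c, hc⟩ := Nat.dvd_of_mod_eq_zero h'
    have c1 : c < 2 := by
      by_contra hcc
      have := Nat.mul_le_mul_left (2 ^ (K + 2) - 1) (show 2 ≤ c by omega)
      omega
    have c0 : c ≠ 0 := by rintro rfl; omega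
    have : c = 1 := by omega
    subst this; omega
  unfold lidx
  generalize n % (2 ^ (K + 2) - 1) = r at *
  generalize n' % (2 ^ (K + 2) - 1) = r' at *
  have hr' : r' ≠ 0 := by omega
  rw [if_neg h, if_neg hr']
  by_cases hr : r ≤ 2 ^ (K + 1) - 1
  · rw [if_pos hr, if_neg (show ¬ r' ≤ 2 ^ (K + 1) - 1 by omega), ← tval_symm_lt _ (K + 1) r (by omega) (by omega)]
    congr 1; omega
  · rw [if_neg hr, if_pos (show r' ≤ 2 ^ (K + 1) - 1 by omega), ← tval_symm_lt _ (K + 1) r' (by omega) (by omega)]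
    congr 1; omega

/-- Symmetry about multiples of the block length. -/
theorem lidx_symm (K ℓ M n : ℕ) (h0 : 0 < n) (h : n < (2 ^ (K + 2) - 1) * M)
    (hM : ∀ m, 0 < m → m < M → tval ℓ (M - m) = tval ℓ m) :
    lidx K ℓ n = lidx K ℓ ((2 ^ (K + 2) - 1) * M - n) := by
  by_cases hn : n % (2 ^ (K + 2) - 1) = 0
  · obtain ⟨m, rfl⟩ := Nat.dvd_of_mod_eq_zero hn
    have hm : m < M := Nat.lt_of_mul_lt_mul_left h
    rw [← Nat.mul_sub, lidx_mul, lidx_mul, hM m (Nat.pos_of_mul_pos_left h0) hm]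
  · apply lidx_congr _ _ _ _ hn
    rw [Nat.add_sub_of_le h.le, Nat.mul_mod_right]

theorem balanced_of_mech {A : Type*} [DecidableEq A] (f : ℕ → A)
    (H : ∀ x : A, ∃ α γ P : ℕ, α ≤ P ∧ 0 < P ∧ ∀ n, f n = x ↔ (α * (n + 1) + γ) % P < α) :
    IsBalanced f := by
  rintro u v ⟨i, hu⟩ ⟨j, hv⟩ hl x
  obtain ⟨α, γ, P, hα, hP, hx⟩ := H x
  have cnt : ∀ i L, ((List.range L).map (fun j => f (i + j))).count x + (α * i + γ) / P
      = (α * i + γ + α * L) / P := by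
    intro i L
    induction L with
    | zero => simp
    | succ L ih =>
      rw [List.range_succ, List.map_append, List.count_append, add_right_comm, ih]
      have h1 := hx (i + L)
      rw [show α * (i + L + 1) + γ = α * i + γ + α * (L + 1) by ring,
        show α * i + γ + α * (L + 1) = α * i + γ + α * L + α by ring] at h1
      rw [show α * i + γ + α * (L + 1) = α * i + γ + α * L + α by ring]
      generalize α * i + γ + α * L = y at *
      have hy := Nat.div_add_mod y P
      have hd := Nat.mod_lt y hP
      generalize y % P = d at *
      generalize y / P = c at *
      subst hy
      rw [add_assoc, Nat.mul_add_mod] at h1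
      rw [add_assoc, Nat.mul_add_div hP]
      by_cases hc : d + α < P
      · rw [Nat.mod_eq_of_lt hc] at h1
        have : f (i + L) ≠ x := fun h => by have := h1.1 h; omega
        simp [this, Nat.div_eq_of_lt hc]
      · have e1 : d + α = (d + α - P) + P := by omega
        rw [e1, Nat.add_mod_right, Nat.mod_eq_of_lt (by omega)] at h1
        have : f (i + L) = x := h1.2 (by omega)
        rw [e1, Nat.add_div_right _ hP, Nat.div_eq_of_lt (by omega)]
        simp [this]
  have cu := cnt i u.length
  have cv := cnt j v.length
  rw [← hu] at cu
  rw [← hv, ← hl] at cv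
  rw [Nat.add_div (a := α * i + γ) hP] at cu
  rw [Nat.add_div (a := α * j + γ) hP] at cv
  split_ifs at cu cv <;> omega

theorem mod_of_eq {x N c y : ℕ} (h : x = N * c + y) (hy : y < N) : x % N = y := by
  rw [h, Nat.mul_add_mod, Nat.mod_eq_of_lt hy]

/-- Arithmetic core for the first half. -/
theorem mech_core1 (X q t e N : ℕ) (hX : 1 ≤ X) (hq : 1 ≤ q) (hN : N + 1 = 4 * (q * X))
    (ht : t < q) (he : e < 2 * X) :
    e = X ↔ (2 * q * (2 * X * t + e) + (q + 2 * (q * X) - 1)) % N < 2 * q := by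
  have hqX : q ≤ q * X := Nat.le_mul_of_pos_right q hX
  have base : 2 * q * (2 * X * t + e) + (q + 2 * (q * X) - 1)
      = N * t + (t + q - 1 + 2 * (q * e) + 2 * (q * X)) := by
    have : 2 * q * (2 * X * t + e) = (4 * (q * X)) * t + 2 * (q * e) := by ring
    rw [this, ← hN, add_mul]; omega
  rcases lt_trichotomy e X with h | h | h
  · have h1 : q * (e + 1) ≤ q * X := Nat.mul_le_mul_left q h
    rw [mul_add] at h1
    rw [mod_of_eq base (by omega)]
    constructor <;> intro <;> omega
  · subst h
    have b2 : 2 * q * (2 * e * t + e) + (q + 2 * (q * e) - 1) = N * (t + 1) + (t + q) := by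
      rw [base, mul_add]; omega
    rw [mod_of_eq b2 (by omega)]
    constructor <;> intro <;> omega
  · obtain ⟨d, rfl⟩ := Nat.exists_eq_add_of_lt h
    have h1 : q * (d + 1) ≤ q * (X - 1) := Nat.mul_le_mul_left q (by omega)
    have h2 : q * (X - 1) + q = q * X := by
      rw [← Nat.mul_succ]; congr 1; omega
    have h3 : q * (X + d + 1) = q * X + q * (d + 1) := by ring
    have h4 : q * (d + 1) = q * d + q := by ring
    have b2 : 2 * q * (2 * X * t + (X + d + 1)) + (q + 2 * (q * X) - 1)
        = N * (t + 1) + (t + q + 2 * (q * (d + 1))) := by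
      rw [base, mul_add N]; omega
    rw [mod_of_eq b2 (by omega)]
    constructor <;> intro <;> omega

/-- Arithmetic core for the second half. -/
theorem mech_core2 (X q t e N : ℕ) (hX : 1 ≤ X) (hq : 1 ≤ q) (hN : N + 1 = 4 * (q * X))
    (ht : t < q) (he : e < 2 * X) (h0 : 0 < t ∨ 0 < e) :
    e = X ↔ (2 * q * ((2 * X * t + e) + (2 * (q * X) - 1)) + (q + 2 * (q * X) - 1)) % N
      < 2 * q := by
  have hqX : q ≤ q * X := Nat.le_mul_of_pos_right q hX
  have base : 2 * q * ((2 * X * t + e) + (2 * (q * X) - 1)) + (q + 2 * (q * X) - 1)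
      = N * (t + q) + (t + 2 * (q * e) + 2 * (q * X) - 1) := by
    have a1 : 2 * q * (2 * X * t + e) = (4 * (q * X)) * t + 2 * (q * e) := by ring
    have a2 : 2 * q * (2 * (q * X) - 1) + 2 * q = (4 * (q * X)) * q := by
      have : 2 * (q * X) - 1 + 1 = 2 * (q * X) := by omega
      calc 2 * q * (2 * (q * X) - 1) + 2 * q = 2 * q * (2 * (q * X) - 1 + 1) := by ring
        _ = _ := by rw [this]; ring
    rw [← hN, add_mul, one_mul] at a1 a2
    rw [mul_add (2 * q), mul_add N]; omega
  rcases lt_trichotomy e X with h | h | h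
  · have h1 : q * (e + 1) ≤ q * X := Nat.mul_le_mul_left q h
    rw [mul_add] at h1
    have h5 : 0 < t ∨ q ≤ q * e := by
      rcases h0 with h0 | h0
      · exact Or.inl h0
      · exact Or.inr (Nat.le_mul_of_pos_right q h0)
    rw [mod_of_eq base (by omega)]
    constructor <;> intro <;> omega
  · subst h
    have b2 : 2 * q * ((2 * e * t + e) + (2 * (q * e) - 1)) + (q + 2 * (q * e) - 1)
        = N * (t + q + 1) + t := by
      rw [base, mul_add N (t + q)]; omega
    rw [mod_of_eq b2 (by omega)]
    constructor <;> intro <;> omega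
  · obtain ⟨d, rfl⟩ := Nat.exists_eq_add_of_lt h
    have h1 : q * (d + 1) ≤ q * (X - 1) := Nat.mul_le_mul_left q (by omega)
    have h2 : q * (X - 1) + q = q * X := by
      rw [← Nat.mul_succ]; congr 1; omega
    have h3 : q * (X + d + 1) = q * X + q * (d + 1) := by ring
    have h4 : q * (d + 1) = q * d + q := by ring
    have b2 : 2 * q * ((2 * X * t + (X + d + 1)) + (2 * (q * X) - 1)) + (q + 2 * (q * X) - 1)
        = N * (t + q + 1) + (t + 2 * (q * (d + 1))) := by
      rw [base, mul_add N (t + q)]; omega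
    rw [mod_of_eq b2 (by omega)]
    constructor <;> intro <;> omega

theorem lidx_mech_small (K ℓ i : ℕ) (hi : i ≤ K) (n : ℕ) :
    lidx K ℓ n = i ↔ (2 * 2 ^ (K - i) * n + (2 ^ (K - i) + 2 ^ (K + 1) - 1)) % (2 ^ (K + 2) - 1)
      < 2 * 2 ^ (K - i) := by
  have hp := powfact K
  have hX : 1 ≤ 2 ^ i := Nat.one_le_two_pow
  have hq : 1 ≤ 2 ^ (K - i) := Nat.one_le_two_pow
  have hqX : 2 ^ K = 2 ^ (K - i) * 2 ^ i := by rw [← pow_add]; congr 1; omega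
  have hq' : 2 ^ (K - i) ≤ 2 ^ (K - i) * 2 ^ i := Nat.le_mul_of_pos_right _ hX
  have a1 := Nat.mod_lt n (show 2 ^ (K + 2) - 1 > 0 by omega)
  have red : (2 * 2 ^ (K - i) * n + (2 ^ (K - i) + 2 ^ (K + 1) - 1)) % (2 ^ (K + 2) - 1)
      = (2 * 2 ^ (K - i) * (n % (2 ^ (K + 2) - 1)) + (2 ^ (K - i) + 2 ^ (K + 1) - 1))
        % (2 ^ (K + 2) - 1) := by
    apply Nat.ModEq.add_right
    exact Nat.ModEq.mul_left _ (Nat.mod_modEq _ _).symm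
  rw [red]
  unfold lidx
  generalize n % (2 ^ (K + 2) - 1) = r at *
  by_cases hr : r = 0
  · subst hr
    rw [if_pos rfl, mul_zero, zero_add, Nat.mod_eq_of_lt (by omega)]
    constructor <;> intro <;> omega
  rw [if_neg hr, tval_lt_iff _ _ _ (by omega)]
  have hD : 2 ^ (i + 1) = 2 * 2 ^ i := by ring
  have tq : ∀ r', r' < 2 ^ (K + 1) → r' / 2 ^ (i + 1) < 2 ^ (K - i) := by
    intro r' h
    rw [Nat.div_lt_iff_lt_mul (by positivity), hD]
    have : 2 ^ (K - i) * (2 * 2 ^ i) = 2 * (2 ^ (K - i) * 2 ^ i) := by ring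
    omega
  by_cases hh : r ≤ 2 ^ (K + 1) - 1
  · rw [if_pos hh]
    have t1 := tq r (by omega)
    have e1 := Nat.mod_lt r (show 2 ^ (i + 1) > 0 by positivity)
    have dm := Nat.div_add_mod r (2 ^ (i + 1))
    rw [hD] at t1 e1 dm ⊢
    have := mech_core1 (2 ^ i) (2 ^ (K - i)) _ _ (2 ^ (K + 2) - 1) hX hq (by omega) t1 e1
    rw [this, dm, hp.2.1, hqX]
  · rw [if_neg hh]
    obtain ⟨r', rfl⟩ : ∃ r', r = r' + (2 ^ (K + 1) - 1) := ⟨r - (2 ^ (K + 1) - 1), by omega⟩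
    rw [Nat.add_sub_cancel]
    have t1 := tq r' (by omega)
    have e1 := Nat.mod_lt r' (show 2 ^ (i + 1) > 0 by positivity)
    have dm := Nat.div_add_mod r' (2 ^ (i + 1))
    rw [hD] at t1 e1 dm ⊢
    have pos : 0 < r' / (2 * 2 ^ i) ∨ 0 < r' % (2 * 2 ^ i) := by
      by_contra hc
      have z1 : r' / (2 * 2 ^ i) = 0 := Nat.eq_zero_of_not_pos fun h => hc (Or.inl h)
      have z2 : r' % (2 * 2 ^ i) = 0 := Nat.eq_zero_of_not_pos fun h => hc (Or.inr h)
      rw [z1, z2] at dm; omega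
    have := mech_core2 (2 ^ i) (2 ^ (K - i)) _ _ (2 ^ (K + 2) - 1) hX hq (by omega) t1 e1 pos
    rw [this, dm, hp.2.1, hqX]

theorem lidx_mech_big (K ℓ j : ℕ) (hj : j ≤ ℓ) : ∃ γ P : ℕ, 0 < P ∧
    ∀ n, lidx K ℓ n = K + 1 + j ↔ (1 * n + γ) % P < 1 := by
  have hp := powfact K
  have hN : 0 < 2 ^ (K + 2) - 1 := by omega
  have aux : ∀ n, lidx K ℓ n = K + 1 + j ↔
      n % (2 ^ (K + 2) - 1) = 0 ∧ tval ℓ (n / (2 ^ (K + 2) - 1)) = j := by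
    intro n
    by_cases h : n % (2 ^ (K + 2) - 1) = 0
    · simp [lidx, h]
    · have := lidx_lt K ℓ n h
      simp only [h, false_and, iff_false]; omega
  rcases hj.lt_or_eq with h | h
  · refine ⟨(2 ^ (K + 2) - 1) * 2 ^ j, (2 ^ (K + 2) - 1) * 2 ^ (j + 1), by positivity, ?_⟩
    intro n
    rw [aux, tval_lt_iff _ _ _ h, one_mul, Nat.lt_one_iff]
    generalize 2 ^ (K + 2) - 1 = N at *
    have hJ : 2 ^ (j + 1) = 2 * 2 ^ j := by ring
    have hJ1 : 1 ≤ 2 ^ j := Nat.one_le_two_pow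
    rw [hJ]
    generalize 2 ^ j = J at *
    have main : ∀ m, m % (2 * J) = J ↔ (m + J) % (2 * J) = 0 := by
      intro m
      have hm := Nat.mod_lt m (show 2 * J > 0 by omega)
      rw [Nat.add_mod, Nat.mod_eq_of_lt (show J < 2 * J by omega)]
      constructor
      · intro h; rw [h, ← two_mul, Nat.mod_self]
      · intro h
        by_cases hc : m % (2 * J) + J < 2 * J
        · rw [Nat.mod_eq_of_lt hc] at h; omega
        · rw [Nat.mod_eq_sub_mod (by omega), Nat.mod_eq_of_lt (by omega)] at h; omega
    constructor
    · rintro ⟨h1, h2⟩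
      obtain ⟨m, rfl⟩ := Nat.dvd_of_mod_eq_zero h1
      rw [Nat.mul_div_cancel_left _ hN, main] at h2
      rw [← Nat.mul_add, Nat.mul_mod_mul_left, h2, mul_zero]
    · intro h1
      have h2 : n % N = 0 := by
        have : N ∣ n + N * J := (Dvd.intro _ rfl).trans (Nat.dvd_of_mod_eq_zero h1)
        exact Nat.mod_eq_zero_of_dvd ((Nat.dvd_add_left (Dvd.intro _ rfl)).1 this)
      obtain ⟨m, rfl⟩ := Nat.dvd_of_mod_eq_zero h2
      refine ⟨h2, ?_⟩
      rw [Nat.mul_div_cancel_left _ hN, main]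
      rw [← Nat.mul_add, Nat.mul_mod_mul_left] at h1
      rcases Nat.mul_eq_zero.1 h1 with h | h
      · omega
      · exact h
  · subst h
    refine ⟨0, (2 ^ (K + 2) - 1) * 2 ^ j, by positivity, ?_⟩
    intro n
    rw [aux, tval_eq_top_iff, one_mul, Nat.lt_one_iff, add_zero]
    generalize 2 ^ (K + 2) - 1 = N at *
    constructor
    · rintro ⟨h1, h2⟩
      obtain ⟨m, rfl⟩ := Nat.dvd_of_mod_eq_zero h1
      rw [Nat.mul_div_cancel_left _ hN] at h2
      rw [Nat.mul_mod_mul_left, h2, mul_zero]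
    · intro h1
      have h2 : n % N = 0 :=
        Nat.mod_eq_zero_of_dvd ((Dvd.intro _ rfl).trans (Nat.dvd_of_mod_eq_zero h1))
      obtain ⟨m, rfl⟩ := Nat.dvd_of_mod_eq_zero h2
      refine ⟨h2, ?_⟩
      rw [Nat.mul_div_cancel_left _ hN]
      rw [Nat.mul_mod_mul_left] at h1
      rcases Nat.mul_eq_zero.1 h1 with h | h
      · omega
      · exact h

theorem lidx_balanced {A : Type*} [DecidableEq A] (K ℓ : ℕ) (a : ℕ → A)
    (hinj : Set.InjOn a (Set.Iio (K + 2 + ℓ))) :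
    IsBalanced (fun n => a (lidx K ℓ (n + 1))) := by
  apply balanced_of_mech
  intro x
  by_cases hx : ∃ i, i < K + 2 + ℓ ∧ a i = x
  · obtain ⟨i, hi, rfl⟩ := hx
    have hiff : ∀ n, a (lidx K ℓ n) = a i ↔ lidx K ℓ n = i := fun n =>
      ⟨fun h => hinj (lidx_bound K ℓ n) hi h, fun h => by rw [h]⟩
    by_cases h : i ≤ K
    · refine ⟨2 * 2 ^ (K - i), 2 ^ (K - i) + 2 ^ (K + 1) - 1, 2 ^ (K + 2) - 1, ?_, ?_, ?_⟩
      · have := powfact K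
        have : 2 ^ (K - i) ≤ 2 ^ K := Nat.pow_le_pow_right (by norm_num) (by omega)
        omega
      · have := powfact K; omega
      · intro n; rw [hiff, lidx_mech_small K ℓ i h]
    · obtain ⟨j, rfl⟩ : ∃ j, i = K + 1 + j := ⟨i - (K + 1), by omega⟩
      obtain ⟨γ, P, hP, hh⟩ := lidx_mech_big K ℓ j (by omega)
      exact ⟨1, γ, P, hP, hP, fun n => by rw [hiff, hh]⟩
  · refine ⟨0, 0, 1, by norm_num, by norm_num, fun n => ?_⟩
    simp only [Nat.not_lt_zero, iff_false]
    exact fun h => hx ⟨_, lidx_bound K ℓ _, h⟩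

section PalComp
variable {A : Type*} [DecidableEq A]

theorem pal_A (K ℓ : ℕ) (a D : ℕ → A) (hinj : Set.InjOn a (Set.Iio (K + 2 + ℓ)))
    (hD : ∀ m, m < K + 1 → D m = a m) (m : ℕ) (hm : m ≤ K + 1) :
    Pal ((List.range m).map D)
      = (List.range (2 ^ m - 1)).map (fun n => a (lidx K ℓ (n + 1))) := by
  induction m with
  | zero => simp [Pal]
  | succ m ih =>
    have h1 : 1 ≤ 2 ^ m := Nat.one_le_two_pow
    have h2 : 2 ^ (m + 1) = 2 * 2 ^ m := by ring
    have h3 : 2 ^ (m + 1) ≤ 2 ^ (K + 1) := Nat.pow_le_pow_right (by norm_num) hm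
    have hL : lidx K ℓ (2 ^ m - 1 + 1) = m := by
      rw [Nat.sub_add_cancel h1, lidx_small _ _ _ (by omega) (by omega), tval_pow _ _ (by omega)]
    have := palClosure_step (fun n => a (lidx K ℓ (n + 1))) (2 ^ m - 1) (2 ^ m - 1) le_rfl
      (by
        intro t ht
        try simp only
        rw [lidx_small _ _ _ (by omega) (by omega), lidx_small _ _ _ (by omega) (by omega),
          ← tval_symm_lt _ (m + 1) (t + 1) (by omega) (by omega)]
        congr 2; omega)
      (by
        intro j hj
        refine ⟨j, le_rfl, by omega, ?_⟩
        try simp only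
        intro h
        have h := hinj (lidx_bound K ℓ _) (lidx_bound K ℓ _) h
        rw [Nat.add_sub_cancel, hL, lidx_small _ _ _ (by omega) (by omega)] at h
        have := tval_lt_of_lt (K + 1) m (j + 1) (by omega) (by omega)
        omega)
    simp only [hL] at this
    rw [Pal_range_succ, ih (by omega), hD m (by omega), this]
    congr 2; omega

theorem pal_B (K ℓ : ℕ) (a D : ℕ → A) (hinj : Set.InjOn a (Set.Iio (K + 2 + ℓ)))
    (hD : ∀ m, m < K + 1 → D m = a m) (hB : D (K + 1) = a 0) :
    Pal ((List.range (K + 2)).map D)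
      = (List.range (2 ^ (K + 2) - 1 - 1)).map (fun n => a (lidx K ℓ (n + 1))) := by
  have hp := powfact K
  have hsym : ∀ n, 0 < n → n < 2 ^ (K + 2) - 1 →
      lidx K ℓ n = lidx K ℓ (2 ^ (K + 2) - 1 - n) := by
    intro n h0 h1
    apply lidx_congr
    · rw [Nat.mod_eq_of_lt h1]; omega
    · rw [Nat.add_sub_of_le h1.le, Nat.mod_self]
  have odd0 : ∀ n, n < 2 ^ (K + 1) → n % 2 = 1 → lidx K ℓ n = 0 := by
    intro n h1 h2
    rw [lidx_small _ _ _ (by omega) h1, tval, if_pos h2]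
  have even0 : ∀ n, 0 < n → n < 2 ^ (K + 1) → n % 2 = 0 → lidx K ℓ n ≠ 0 := by
    intro n h0 h1 h2
    rw [lidx_small _ _ _ h0 h1, tval, if_neg (by omega)]; omega
  have hL' : lidx K ℓ (2 ^ (K + 1) - 1) = 0 := odd0 _ (by omega) (by omega)
  have hL : lidx K ℓ (2 ^ (K + 1) - 1 + 1) = 0 := by
    rw [hsym _ (by omega) (by omega), ← hL']
    congr 1; omega
  have := palClosure_step (fun n => a (lidx K ℓ (n + 1))) (2 ^ (K + 1) - 1) (2 ^ (K + 1) - 1 - 1)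
    (by omega)
    (by
      intro t ht
      try simp only
      rw [hsym _ (by omega) (by omega)]
      congr 2; omega)
    (by
      intro j hj
      by_cases hpar : (j + 1) % 2 = 0
      · refine ⟨j, le_rfl, by omega, ?_⟩
        try simp only
        intro h
        have h := hinj (lidx_bound K ℓ _) (lidx_bound K ℓ _) h
        rw [Nat.add_sub_cancel, hL] at h
        exact even0 _ (by omega) (by omega) hpar h
      · refine ⟨j + 1, by omega, by omega, ?_⟩
        try simp only
        intro h
        have h := hinj (lidx_bound K ℓ _) (lidx_bound K ℓ _) h
        rw [show 2 ^ (K + 1) - 1 + j - (j + 1) + 1 = 2 ^ (K + 1) - 1 by omega, hL'] at h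
        exact even0 _ (by omega) (by omega) (by omega) h)
  simp only [hL] at this
  rw [Pal_range_succ, pal_A K ℓ a D hinj hD (K + 1) le_rfl, hB, this]
  congr 2; omega

theorem pal_C (K ℓ : ℕ) (a D : ℕ → A) (hinj : Set.InjOn a (Set.Iio (K + 2 + ℓ)))
    (hD : ∀ m, m < K + 1 → D m = a m) (hB : D (K + 1) = a 0)
    (hC : ∀ j, j < ℓ → D (K + 2 + j) = a (K + 1 + j)) (j : ℕ) (hj : j ≤ ℓ) :
    Pal ((List.range (K + 2 + j)).map D)
      = (List.range ((2 ^ (K + 2) - 1) * 2 ^ j - 1)).map (fun n => a (lidx K ℓ (n + 1))) := by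
  induction j with
  | zero => simpa using pal_B K ℓ a D hinj hD hB
  | succ j ih =>
    have hp := powfact K
    have hN : 0 < 2 ^ (K + 2) - 1 := by omega
    have hL1 : 1 ≤ (2 ^ (K + 2) - 1) * 2 ^ j := Nat.mul_pos hN (by positivity)
    have hL2 : (2 ^ (K + 2) - 1) * 2 ^ (j + 1) = 2 * ((2 ^ (K + 2) - 1) * 2 ^ j) := by ring
    have hL : lidx K ℓ ((2 ^ (K + 2) - 1) * 2 ^ j - 1 + 1) = K + 1 + j := by
      rw [Nat.sub_add_cancel hL1, lidx_mul, tval_pow _ _ (by omega)]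
    have := palClosure_step (fun n => a (lidx K ℓ (n + 1))) ((2 ^ (K + 2) - 1) * 2 ^ j - 1)
      ((2 ^ (K + 2) - 1) * 2 ^ j - 1) le_rfl
      (by
        intro t ht
        try simp only
        rw [lidx_symm K ℓ (2 ^ (j + 1)) (t + 1) (by omega) (by omega)
          (fun m h0 h1 => tval_symm_lt _ _ _ h0 h1)]
        congr 2; omega)
      (by
        intro i hi
        refine ⟨i, le_rfl, by omega, ?_⟩
        try simp only
        intro h
        have h := hinj (lidx_bound K ℓ _) (lidx_bound K ℓ _) h
        rw [Nat.add_sub_cancel, hL] at h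
        by_cases hm : (i + 1) % (2 ^ (K + 2) - 1) = 0
        · obtain ⟨m, hm⟩ := Nat.dvd_of_mod_eq_zero hm
          rw [hm, lidx_mul] at h
          have : m < 2 ^ j := by
            apply Nat.lt_of_mul_lt_mul_left (a := 2 ^ (K + 2) - 1); omega
          have m0 : 0 < m := by
            rcases Nat.eq_zero_or_pos m with h | h
            · subst h; omega
            · exact h
          have := tval_lt_of_lt ℓ j m m0 this
          omega
        · have := lidx_lt K ℓ _ hm
          omega)
    simp only [hL] at this
    rw [← add_assoc, Pal_range_succ, ih (by omega), hC j (by omega), this]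
    congr 2; omega

theorem pal_D (K ℓ : ℕ) (a D : ℕ → A) (hinj : Set.InjOn a (Set.Iio (K + 2 + ℓ)))
    (hD : ∀ m, m < K + 1 → D m = a m) (hB : D (K + 1) = a 0)
    (hC : ∀ j, j < ℓ → D (K + 2 + j) = a (K + 1 + j))
    (hE : ∀ t, D (K + 2 + ℓ + t) = a (K + 1 + ℓ)) (t : ℕ) :
    Pal ((List.range (K + 2 + ℓ + t)).map D)
      = (List.range ((2 ^ (K + 2) - 1) * (2 ^ ℓ * (t + 1)) - 1)).map
        (fun n => a (lidx K ℓ (n + 1))) := by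
  induction t with
  | zero => simpa using pal_C K ℓ a D hinj hD hB hC ℓ le_rfl
  | succ t ih =>
    have hp := powfact K
    have hN : 0 < 2 ^ (K + 2) - 1 := by omega
    have hL1 : 1 ≤ (2 ^ (K + 2) - 1) * 2 ^ ℓ := Nat.mul_pos hN (by positivity)
    have hL3 : (2 ^ (K + 2) - 1) * 2 ^ ℓ ≤ (2 ^ (K + 2) - 1) * (2 ^ ℓ * (t + 1)) :=
      Nat.mul_le_mul_left _ (Nat.le_mul_of_pos_right _ (by omega))
    have hL2 : (2 ^ (K + 2) - 1) * (2 ^ ℓ * (t + 1 + 1))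
      = (2 ^ (K + 2) - 1) * (2 ^ ℓ * (t + 1)) + (2 ^ (K + 2) - 1) * 2 ^ ℓ := by ring
    have hL : lidx K ℓ ((2 ^ (K + 2) - 1) * (2 ^ ℓ * (t + 1)) - 1 + 1) = K + 1 + ℓ := by
      rw [Nat.sub_add_cancel (by omega), lidx_mul, (tval_eq_top_iff _ _).2 (by simp)]
    have := palClosure_step (fun n => a (lidx K ℓ (n + 1)))
      ((2 ^ (K + 2) - 1) * (2 ^ ℓ * (t + 1)) - 1)
      ((2 ^ (K + 2) - 1) * 2 ^ ℓ - 1) (by omega)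
      (by
        intro u hu
        try simp only
        rw [lidx_symm K ℓ (2 ^ ℓ * (t + 1 + 1)) (u + 1) (by omega) (by omega)
          (fun m h0 h1 => tval_symm_mul _ _ _ h1.le)]
        congr 2; omega)
      (by
        intro i hi
        refine ⟨i, le_rfl, by omega, ?_⟩
        try simp only
        intro h
        have h := hinj (lidx_bound K ℓ _) (lidx_bound K ℓ _) h
        rw [Nat.add_sub_cancel, hL] at h
        by_cases hm : (i + 1) % (2 ^ (K + 2) - 1) = 0
        · obtain ⟨m, hm⟩ := Nat.dvd_of_mod_eq_zero hm
          rw [hm, lidx_mul] at h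
          have : m < 2 ^ ℓ := by
            apply Nat.lt_of_mul_lt_mul_left (a := 2 ^ (K + 2) - 1); omega
          have m0 : 0 < m := by
            rcases Nat.eq_zero_or_pos m with h | h
            · subst h; omega
            · exact h
          have := tval_lt_of_lt ℓ ℓ m m0 this
          omega
        · have := lidx_lt K ℓ _ hm
          omega)
    simp only [hL] at this
    rw [← add_assoc, Pal_range_succ, ih, hE t, this]
    congr 2; omega

end PalComp

/-- A standard episturmian sequence with directive sequence
`a₁⋯a_{k−1}·a₁·a_k⋯a_{k+ℓ−1}·a_{k+ℓ}^ω` (`k ≥ 2`, `ℓ ≥ 1`, pairwise distinct letters,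
indexed from 0 here) is balanced. -/
theorem family_b_balanced {A : Type*} [DecidableEq A] (s : ℕ → A)
    (k ℓ : ℕ) (a : ℕ → A)
    (hk : 2 ≤ k) (hℓ : 1 ≤ ℓ) (hinj : Set.InjOn a (Set.Iio (k + ℓ)))
    (hepi : IsStdEpisturmian s
      (wcat ((List.range (k - 1)).map a ++ [a 0] ++
          ((List.range (k + ℓ - 1)).drop (k - 1)).map a)
        (constW (a (k + ℓ - 1))))) :
    IsBalanced s := by
  obtain ⟨K, rfl⟩ : ∃ K, k = K + 2 := ⟨k - 2, by omega⟩
  have hlen : ((List.range (K + 2 - 1)).map a ++ [a 0] ++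
      ((List.range (K + 2 + ℓ - 1)).drop (K + 2 - 1)).map a).length = K + 2 + ℓ := by
    simp; omega
  generalize hΔ : wcat ((List.range (K + 2 - 1)).map a ++ [a 0] ++
      ((List.range (K + 2 + ℓ - 1)).drop (K + 2 - 1)).map a)
        (constW (a (K + 2 + ℓ - 1))) = D at hepi
  have hD : ∀ m, m < K + 1 → D m = a m := by
    intro m hm
    rw [← hΔ, wcat, dif_pos (by omega), List.get_eq_getElem,
      List.getElem_append_left (by simp; omega), List.getElem_append_left (by simp; omega)]
    simp
  have hB : D (K + 1) = a 0 := by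
    rw [← hΔ, wcat, dif_pos (by omega), List.get_eq_getElem,
      List.getElem_append_left (by simp), List.getElem_append_right (by simp)]
    simp
  have hC : ∀ j, j < ℓ → D (K + 2 + j) = a (K + 1 + j) := by
    intro j hj
    rw [← hΔ, wcat, dif_pos (by omega), List.get_eq_getElem,
      List.getElem_append_right (by simp)]
    simp
  have hE : ∀ t, D (K + 2 + ℓ + t) = a (K + 1 + ℓ) := by
    intro t
    rw [← hΔ, wcat, dif_neg (by omega), constW]
    congr 1; omega
  have hs : s = fun n => a (lidx K ℓ (n + 1)) := by
    funext n
    have h := hepi (K + 2 + ℓ + (n + 1))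
    rw [pal_D K ℓ a D hinj hD hB hC hE, IsPrefixOf] at h
    have hp := powfact K
    have hlt : n < (2 ^ (K + 2) - 1) * (2 ^ ℓ * (n + 1 + 1)) - 1 := by
      have h1 : n + 1 + 1 ≤ 2 ^ ℓ * (n + 1 + 1) := Nat.le_mul_of_pos_left _ (by positivity)
      have h2 : 2 ^ ℓ * (n + 1 + 1) ≤ (2 ^ (K + 2) - 1) * (2 ^ ℓ * (n + 1 + 1)) :=
        Nat.le_mul_of_pos_left _ (by omega)
      omega
    have h := congrArg (fun l => l[n]?) h
    simp only [List.length_map, List.length_range] at h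
    rw [List.getElem?_eq_getElem (by simpa using hlt),
      List.getElem?_eq_getElem (by simpa using hlt)] at h
    simp at h
    exact h.symm
  rw [hs]
  exact lidx_balanced K ℓ a hinj
end
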